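/- arXiv:0904.1337 — 8 statements merged into one kernel-verified Lean document; each statement's English description precedes it below -/
import Mathlib

section
/- For every s ∈ ℂ and every real y > 4, |K_s(y)| ≤ e^{−y/2}·K_{Re(s)}(2). -/
open MeasureTheory

/-- The K-Bessel function `K_s(y) = (1/2) ∫_0^∞ e^{-y(t+1/t)/2} t^s dt/t`. -/
noncomputable def KBessel (s : ℂ) (y : ℝ) : ℂ :=
  (1 / 2 : ℂ) * ∫ t in Set.Ioi (0 : ℝ), (Real.exp (-(y * (t + 1 / t)) / 2) : ℂ) * (t : ℂ) ^ (s - 1)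

lemma KB_integrable (r : ℝ) :
    IntegrableOn (fun t : ℝ => Real.exp (-(2 * (t + 1 / t)) / 2) * t ^ (r - 1)) (Set.Ioi 0) := by
  obtain ⟨n, hn⟩ := exists_nat_gt (-r)
  have h0 : 0 < r + n := by linarith
  have hG := (Real.GammaIntegral_convergent h0).const_mul (n.factorial : ℝ)
  refine Integrable.mono' hG ?_ ?_
  · apply Measurable.aestronglyMeasurable
    fun_prop
  · refine (ae_restrict_mem measurableSet_Ioi).mono fun t ht => ?_
    have ht : 0 < t := ht
    rw [Real.norm_of_nonneg (by positivity)]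
    have h1 : Real.exp (-(2 * (t + 1 / t)) / 2) = Real.exp (-t) * Real.exp (-(1 / t)) := by
      rw [← Real.exp_add]; congr 1; ring
    have h2 : Real.exp (-(1 / t)) ≤ n.factorial * t ^ n := by
      have := Real.pow_div_factorial_le_exp (1 / t) (by positivity) n
      rw [Real.exp_neg]
      have h3 : (n.factorial : ℝ) * t ^ n = ((1 / t) ^ n / n.factorial)⁻¹ := by
        rw [one_div, inv_pow]; field_simp
      rw [h3]
      exact inv_anti₀ (by positivity) this
    have h4 : t ^ (r + n - 1) = t ^ n * t ^ (r - 1) := by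
      rw [← Real.rpow_natCast, ← Real.rpow_add ht]; congr 1; ring
    rw [h1, h4]
    calc Real.exp (-t) * Real.exp (-(1 / t)) * t ^ (r - 1)
        ≤ Real.exp (-t) * (n.factorial * t ^ n) * t ^ (r - 1) := by gcongr
      _ = _ := by ring

lemma KB_real (r : ℝ) : ‖KBessel (r : ℂ) 2‖ =
    1 / 2 * ∫ t in Set.Ioi (0 : ℝ), Real.exp (-(2 * (t + 1 / t)) / 2) * t ^ (r - 1) := by
  have h : ∫ t in Set.Ioi (0 : ℝ),
      (Real.exp (-(2 * (t + 1 / t)) / 2) : ℂ) * (t : ℂ) ^ ((r : ℂ) - 1) =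
      ((∫ t in Set.Ioi (0 : ℝ), Real.exp (-(2 * (t + 1 / t)) / 2) * t ^ (r - 1) : ℝ) : ℂ) := by
    rw [← integral_complex_ofReal]
    refine setIntegral_congr_fun measurableSet_Ioi fun t ht => ?_
    have ht : 0 < t := ht
    simp only [Complex.ofReal_mul]
    rw [Complex.ofReal_cpow ht.le]
    push_cast
    rfl
  unfold KBessel
  rw [h, norm_mul, Complex.norm_real, Real.norm_of_nonneg]
  · norm_num
  · refine setIntegral_nonneg measurableSet_Ioi fun t ht => ?_
    have ht : 0 < t := ht
    positivity

/-- For every `s ∈ ℂ` and every real `y > 4`, `|K_s(y)| ≤ e^{-y/2} · K_{Re(s)}(2)`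
(note that `K_ν(2)` is a positive real number for real `ν`, so it equals its absolute value). -/
theorem abs_KBessel_le (s : ℂ) (y : ℝ) (hy : 4 < y) :
    ‖KBessel s y‖ ≤ Real.exp (-y / 2) * ‖KBessel (s.re : ℂ) 2‖ := by
  rw [KB_real]
  unfold KBessel
  rw [norm_mul]
  have h : ‖∫ t in Set.Ioi (0 : ℝ),
      (Real.exp (-(y * (t + 1 / t)) / 2) : ℂ) * (t : ℂ) ^ (s - 1)‖ ≤
      ∫ t in Set.Ioi (0 : ℝ), Real.exp (-y / 2) *
        (Real.exp (-(2 * (t + 1 / t)) / 2) * t ^ (s.re - 1)) := by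
    refine norm_integral_le_of_norm_le ((KB_integrable s.re).const_mul _) ?_
    refine (ae_restrict_mem measurableSet_Ioi).mono fun t ht => ?_
    have ht : 0 < t := ht
    rw [norm_mul, Complex.norm_real, Real.norm_of_nonneg (Real.exp_pos _).le,
      Complex.norm_cpow_eq_rpow_re_of_pos ht, ← mul_assoc, ← Real.exp_add]
    simp only [Complex.sub_re, Complex.one_re]
    gcongr
    have hu : 2 ≤ t + 1 / t := by
      have : t + 1 / t - 2 = (t - 1) ^ 2 / t := by field_simp; ring
      have : 0 ≤ (t - 1) ^ 2 / t := by positivity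
      linarith
    nlinarith
  rw [integral_const_mul] at h
  have h2 : ‖(1 / 2 : ℂ)‖ = 1 / 2 := by norm_num
  rw [h2]
  linarith
end

section
/- For every s ∈ ℂ with s ≠ 0 and s ≠ 1, the rank-two non-abelian zeta function of ℚ satisfies the functional equation ξ_{ℚ,2}(1−s) = ξ_{ℚ,2}(s). -/
/-- The rank-two non-abelian zeta function of `ℚ`:
`ξ_{ℚ,2}(s) = ξ(2s)/(s-1) − ξ(2s-1)/s`, where `ξ` is the completed Riemann zeta function. -/
noncomputable def xiQ2 (s : ℂ) : ℂ :=
  completedRiemannZeta (2 * s) / (s - 1) - completedRiemannZeta (2 * s - 1) / s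

/-- Functional equation of the rank-two non-abelian zeta function of `ℚ`:
for `s ≠ 0, 1` one has `ξ_{ℚ,2}(1 − s) = ξ_{ℚ,2}(s)`. -/
theorem xiQ2_one_sub (s : ℂ) (hs0 : s ≠ 0) (hs1 : s ≠ 1) : xiQ2 (1 - s) = xiQ2 s := by
  have h1 : completedRiemannZeta (2 * (1 - s)) = completedRiemannZeta (2 * s - 1) := by
    rw [← completedRiemannZeta_one_sub (2 * s - 1)]
    congr 1
    ring
  have h2 : completedRiemannZeta (2 * (1 - s) - 1) = completedRiemannZeta (2 * s) := by
    rw [← completedRiemannZeta_one_sub (2 * s)]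
    congr 1
    ring
  have e1 : (1 - s - 1 : ℂ) = -s := by ring
  have e2 : (1 - s : ℂ) = -(s - 1) := by ring
  unfold xiQ2
  rw [h1, h2, e1, e2, div_neg, div_neg]
  ring
end

section
/- There exists a function g, analytic on ℂ ∖ {0, 1}, such that g(s) = ξ_{ℚ,2}(s) for all s ∉ {0, 1/2, 1} (so the apparent singularity of ξ_{ℚ,2} at s = 1/2 is removable), and g has simple poles at s = 0 and s = 1 with lim_{s→1} (s−1)·g(s) = ξ(2) − 1/2 ≠ 0 and lim_{s→0} s·g(s) = 1/2 − ξ(2) ≠ 0; in particular the two residues are negatives of each other. -/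
open Filter Topology

theorem xi_two_aux : completedRiemannZeta 2 = (Real.pi : ℂ) / 6 := by
  have h := riemannZeta_def_of_ne_zero (two_ne_zero : (2 : ℂ) ≠ 0)
  have hp : (Real.pi : ℂ) ≠ 0 := by exact_mod_cast Real.pi_ne_zero
  have hG : Complex.Gammaℝ 2 = (Real.pi : ℂ)⁻¹ := by
    rw [Complex.Gammaℝ_def]
    norm_num [Complex.cpow_neg_one]
  rw [riemannZeta_two, hG] at h
  field_simp at h
  linear_combination -h / 6

theorem xi_two_ne_aux : completedRiemannZeta 2 - 1/2 ≠ 0 := by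
  rw [xi_two_aux]
  intro h
  have h2 : (Real.pi : ℂ) = ((3 : ℝ) : ℂ) := by
    push_cast
    linear_combination 6 * h
  have h3 : Real.pi = 3 := by exact_mod_cast h2
  linarith [Real.pi_gt_three]

/-- There is a function `g`, analytic on `ℂ ∖ {0,1}`, agreeing with `ξ_{ℚ,2}` away from
`{0, 1/2, 1}` (so the singularity at `1/2` is removable), with simple poles at `0` and `1`:
`(s−1)·g(s) → ξ(2) − 1/2 ≠ 0` as `s → 1` and `s·g(s) → 1/2 − ξ(2) ≠ 0` as `s → 0`;
in particular the two residues are negatives of each other. -/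
theorem xiQ2_extension :
    ∃ g : ℂ → ℂ,
      AnalyticOnNhd ℂ g ({0, 1} : Set ℂ)ᶜ ∧
      (∀ s : ℂ, s ∉ ({0, 1/2, 1} : Set ℂ) → g s = xiQ2 s) ∧
      Tendsto (fun s : ℂ => (s - 1) * g s) (𝓝[≠] 1)
        (𝓝 (completedRiemannZeta 2 - 1/2)) ∧
      completedRiemannZeta 2 - 1/2 ≠ 0 ∧
      Tendsto (fun s : ℂ => s * g s) (𝓝[≠] 0)
        (𝓝 (1/2 - completedRiemannZeta 2)) ∧
      1/2 - completedRiemannZeta 2 ≠ 0 ∧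
      completedRiemannZeta 2 - 1/2 = -(1/2 - completedRiemannZeta 2) := by
  have hd := differentiable_completedZeta₀
  have h2 : completedRiemannZeta₀ 2 = completedRiemannZeta 2 - 1/2 := by
    rw [completedRiemannZeta_eq]; norm_num; ring
  have hm1 : completedRiemannZeta₀ (-1) = completedRiemannZeta 2 - 1/2 := by
    rw [← h2, ← completedRiemannZeta₀_one_sub]; norm_num
  have hA : Differentiable ℂ (fun s : ℂ => completedRiemannZeta₀ (2 * s)) :=
    hd.comp (by fun_prop)
  have hB : Differentiable ℂ (fun s : ℂ => completedRiemannZeta₀ (2 * s - 1)) :=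
    hd.comp (by fun_prop)
  refine ⟨fun s => completedRiemannZeta₀ (2 * s) / (s - 1) - completedRiemannZeta₀ (2 * s - 1) / s,
    ?_, ?_, ?_, xi_two_ne_aux, ?_, ?_, by ring⟩
  · intro s hs
    simp only [Set.mem_compl_iff, Set.mem_insert_iff, Set.mem_singleton_iff, not_or] at hs
    have a1 : AnalyticAt ℂ (fun z : ℂ => z - 1) s := analyticAt_id.sub analyticAt_const
    have a2 : AnalyticAt ℂ (fun z : ℂ => z) s := analyticAt_id
    have b1 := (hA.analyticAt s).fun_div a1 (sub_ne_zero.2 hs.2)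
    have b2 := (hB.analyticAt s).fun_div a2 hs.1
    exact b1.fun_sub b2
  · intro s hs
    simp only [Set.mem_insert_iff, Set.mem_singleton_iff, not_or] at hs
    obtain ⟨h0, hh, h1⟩ := hs
    have e1 : s - 1 ≠ 0 := sub_ne_zero.2 h1
    have e2 : 2 * s - 1 ≠ 0 := fun h => hh (by linear_combination h / 2)
    have i1 : 1 / (1 - 2 * s) = -(1 / (2 * s - 1)) := by
      rw [← one_div_neg_eq_neg_one_div]; congr 1; ring
    have i2 : 1 / (1 - (2 * s - 1)) = -(1 / (2 * (s - 1))) := by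
      rw [← one_div_neg_eq_neg_one_div]; congr 1; ring
    simp only [xiQ2]
    rw [completedRiemannZeta_eq, completedRiemannZeta_eq, i1, i2]
    field_simp
    ring
  · have hc : ContinuousAt (fun s : ℂ => completedRiemannZeta₀ (2 * s)
        - (s - 1) * (completedRiemannZeta₀ (2 * s - 1) / s)) 1 :=
      hA.continuous.continuousAt.sub ((by fun_prop : ContinuousAt (fun s : ℂ => s - 1) 1).mul
        (hB.continuous.continuousAt.div continuousAt_id one_ne_zero))
    have ht := hc.tendsto.mono_left (nhdsWithin_le_nhds (s := {1}ᶜ))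
    simp only [mul_one, sub_self, zero_mul, sub_zero, h2] at ht
    refine ht.congr' ?_
    filter_upwards [self_mem_nhdsWithin] with s hs
    have e1 : s - 1 ≠ 0 := sub_ne_zero.2 hs
    rw [mul_sub, mul_div_cancel₀ _ e1]
  · have hc : ContinuousAt (fun s : ℂ => s * (completedRiemannZeta₀ (2 * s) / (s - 1))
        - completedRiemannZeta₀ (2 * s - 1)) 0 :=
      (continuousAt_id.mul (hA.continuous.continuousAt.div
        (by fun_prop : ContinuousAt (fun s : ℂ => s - 1) 0) (by norm_num))).sub
        hB.continuous.continuousAt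
    have ht := hc.tendsto.mono_left (nhdsWithin_le_nhds (s := {0}ᶜ))
    simp only [mul_zero, zero_mul, zero_sub, hm1, neg_sub] at ht
    refine ht.congr' ?_
    filter_upwards [self_mem_nhdsWithin] with s hs
    have e1 : s ≠ 0 := hs
    rw [mul_sub, mul_div_cancel₀ _ e1]
  · rw [← neg_sub]
    exact neg_ne_zero.2 xi_two_ne_aux
end

section
/- Let Λ be a lattice in a finite-dimensional real inner product space E, and let Λ₁, Λ₂ be subgroups of Λ. Then c(Λ₁ ∩ Λ₂) · c(Λ₁ + Λ₂) ≤ c(Λ₁) · c(Λ₂). (Equivalently, in the paper's notation, Vol(Λ₁/(Λ₁∩Λ₂)) ≥ Vol((Λ₁+Λ₂)/Λ₂), where the quotients carry the metric induced by orthogonal projection, since Vol(A/B) = c(A)/c(B) for B ⊆ A.) -/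
open RealInnerProductSpace

/-- The covolume of the subgroup generated by a ℤ-linearly independent family `b`, regarded as a
full-rank lattice in its real span: the square root of the Gram determinant of `b`. -/
noncomputable def gramCovol {E : Type*} [NormedAddCommGroup E] [InnerProductSpace ℝ E]
    {n : ℕ} (b : Fin n → E) : ℝ :=
  Real.sqrt (Matrix.det (Matrix.of fun i j => ⟪b i, b j⟫))

section Helpers
open Matrix

open scoped MatrixOrder Matrix.Norms.L2Operator in
theorem det_le_of_psd {n : Type*} [Fintype n] [DecidableEq n] {S D : Matrix n n ℝ}
    (hS : S.PosSemidef) (hD : D.PosDef) (hDS : (D - S).PosSemidef) : S.det ≤ D.det := by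
  obtain ⟨Y, hY, rfl⟩ : ∃ Y : Matrix n n ℝ, IsUnit Y ∧ D = Yᴴ * Y := by
    obtain ⟨Y, rfl⟩ := CStarAlgebra.nonneg_iff_eq_star_mul_self.mp hD.posSemidef.nonneg
    refine ⟨Y, ?_, rfl⟩
    have := hD.det_pos
    rw [star_eq_conjTranspose, det_mul, det_conjTranspose] at this
    rw [Matrix.isUnit_iff_isUnit_det, isUnit_iff_ne_zero]
    intro h
    simp [h] at this
  have hYd : IsUnit Y.det := (Matrix.isUnit_iff_isUnit_det _).1 hY
  set M := (Y⁻¹)ᴴ * S * Y⁻¹ with hM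
  have hMp : M.PosSemidef := hS.conjTranspose_mul_mul_same _
  have h1M : (1 - M).PosSemidef := by
    have := hDS.conjTranspose_mul_mul_same Y⁻¹
    convert this using 1
    rw [mul_sub, sub_mul, hM]
    congr 1
    rw [← mul_assoc, mul_assoc, Matrix.mul_nonsing_inv _ hYd, mul_one, ← conjTranspose_mul,
      Matrix.mul_nonsing_inv _ hYd, conjTranspose_one]
  have hdet : M.det ≤ 1 := by
    rw [hMp.1.det_eq_prod_eigenvalues]
    simp only [RCLike.ofReal_real_eq_id, id]
    apply Finset.prod_le_one
    · intro i _; exact hMp.eigenvalues_nonneg i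
    · intro i _
      have h := h1M.dotProduct_mulVec_nonneg (hMp.1.eigenvectorBasis i).ofLp
      rw [sub_mulVec, hMp.1.mulVec_eigenvectorBasis, one_mulVec, dotProduct_sub,
        dotProduct_smul] at h
      have h2 : star (hMp.1.eigenvectorBasis i).ofLp ⬝ᵥ (hMp.1.eigenvectorBasis i).ofLp = 1 := by
        have := hMp.1.eigenvectorBasis.orthonormal.1 i
        have h3 := EuclideanSpace.real_norm_sq_eq (hMp.1.eigenvectorBasis i)
        rw [this] at h3
        simp only [dotProduct, star_trivial]
        rw [← one_pow 2, h3]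
        simp [sq]
      rw [h2] at h
      simp at h
      exact h
  have e : S.det = (Yᴴ * Y).det * M.det := by
    have h0 : Y.det ≠ 0 := hYd.ne_zero
    rw [hM]
    simp only [det_mul, det_conjTranspose, star_trivial, det_nonsing_inv, Ring.inverse_eq_inv']
    field_simp
  rw [e]
  nlinarith [hD.det_pos]

theorem linInd_real {E : Type*} [NormedAddCommGroup E] [InnerProductSpace ℝ E]
    [FiniteDimensional ℝ E] (Λ : Submodule ℤ E) [DiscreteTopology Λ] {n : ℕ} (b : Fin n → E)
    (hb : LinearIndependent ℤ b) (h : Submodule.span ℤ (Set.range b) ≤ Λ) :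
    LinearIndependent ℝ b := by
  have hd : DiscreteTopology (Submodule.span ℤ (Set.range b)) :=
    DiscreteTopology.of_subset (s := (Λ : Set E)) ‹_› h
  rw [linearIndependent_iff_card_eq_finrank_span,
    Real.finrank_eq_int_finrank_of_discrete hd]
  exact (finrank_span_eq_card hb).symm

/-- change of basis -/
theorem det_change {M : Type*} [AddCommGroup M] [Module ℝ M] {ι κ : Type*} [Fintype ι] [Fintype κ]
    [DecidableEq ι] [DecidableEq κ] (F : M →ₗ[ℝ] M →ₗ[ℝ] ℝ) (v : ι → M) (w : κ → M)
    (hv : LinearIndependent ℤ v) (hw : LinearIndependent ℤ w)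
    (h : Submodule.span ℤ (Set.range v) = Submodule.span ℤ (Set.range w)) :
    (Matrix.of fun i j => F (v i) (v j)).det = (Matrix.of fun i j => F (w i) (w j)).det := by
  let bv := Module.Basis.span hv
  let bw := (Module.Basis.span hw).map (LinearEquiv.ofEq _ _ h.symm)
  let e : ι ≃ κ := bv.indexEquiv bw
  let bw' := bw.reindex e.symm
  have hbv : ∀ i, ((bv i : _) : M) = v i := fun i => by simp [bv, Module.Basis.span_apply]
  have hbw : ∀ i, ((bw' i : _) : M) = w (e i) := fun i => by
    simp [bw', bw, Module.Basis.span_apply]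
  let A : Matrix ι ι ℤ := bv.toMatrix bw'
  have hA : ∀ i, w (e i) = ∑ j, (A j i : ℝ) • v j := by
    intro i
    have := congrArg (Submodule.subtype _) (bv.sum_toMatrix_smul_self bw' i)
    simp only [map_sum, Submodule.subtype_apply, hbw, Submodule.coe_smul, hbv] at this
    rw [← this]
    simp [A, Int.cast_smul_eq_zsmul]
  have hdetA : (A.det : ℝ) * A.det = 1 := by
    have : IsUnit A.det := by
      have := bv.toMatrix_mul_toMatrix_flip bw'
      exact IsUnit.of_mul_eq_one _ (by rw [← det_mul, this, det_one])
    rcases Int.isUnit_iff.1 this with h | h <;> simp [h]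
  have e1 : (Matrix.of fun i j => F (w i) (w j)).det
      = (Matrix.of fun i j => F (w (e i)) (w (e j))).det := by
    rw [← det_submatrix_equiv_self e]; rfl
  have e2 : (Matrix.of fun i j => F (w (e i)) (w (e j)))
      = (A.map (Int.cast : ℤ → ℝ))ᵀ * (Matrix.of fun i j => F (v i) (v j)) * (A.map (Int.cast : ℤ → ℝ)) := by
    ext i j
    simp only [of_apply, hA, map_sum, map_smul, LinearMap.sum_apply, LinearMap.smul_apply,
      Matrix.mul_apply, transpose_apply, map_apply, smul_eq_mul, Finset.sum_mul, Finset.mul_sum]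
    refine Finset.sum_congr rfl fun _ _ => Finset.sum_congr rfl fun _ _ => by ring
  have e3 : (A.map (Int.cast : ℤ → ℝ)).det = A.det := by
    exact (Int.cast_det A).symm
  rw [e1, e2, det_mul, det_mul, det_transpose, e3]
  linear_combination -(Matrix.of fun i j => F (v i) (v j)).det * hdetA

theorem proj_formula {E : Type*} [NormedAddCommGroup E] [InnerProductSpace ℝ E]
    [FiniteDimensional ℝ E] {m : ℕ} {κ : Type*} (u : Fin m → E) (hu : LinearIndependent ℝ u)
    (q : κ → E) :
    (Matrix.of fun i j => ⟪q i, u j⟫) * (Matrix.of fun i j => ⟪u i, u j⟫)⁻¹ *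
      (Matrix.of fun i j => ⟪u i, q j⟫) =
    Matrix.of fun i j => ⟪(Submodule.span ℝ (Set.range u)).starProjection (q i),
      (Submodule.span ℝ (Set.range u)).starProjection (q j)⟫ := by
  set K := Submodule.span ℝ (Set.range u)
  have hmem : ∀ i, ∃ c : Fin m → ℝ, ∑ k, c k • u k = K.starProjection (q i) := fun i =>
    (Submodule.mem_span_range_iff_exists_fun ℝ).1 (K.starProjection_apply_mem (q i))
  choose c hc using hmem
  have huK : ∀ k, u k ∈ K := fun k => Submodule.subset_span ⟨k, rfl⟩
  have hin : ∀ i k, ⟪u k, q i⟫ = ⟪u k, K.starProjection (q i)⟫ := by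
    intro i k
    rw [← Submodule.inner_starProjection_left_eq_right,
      Submodule.starProjection_eq_self_iff.2 (huK k)]
  set G : Matrix (Fin m) (Fin m) ℝ := Matrix.of fun i j => ⟪u i, u j⟫ with hG
  have hGu : IsUnit G.det := by
    have := (Matrix.posDef_gram_of_linearIndependent (𝕜 := ℝ) hu).det_pos
    exact isUnit_iff_ne_zero.2 this.ne'
  have h2 : (Matrix.of fun i j => ⟪u i, q j⟫) = G * (Matrix.of c)ᵀ := by
    ext i j
    simp only [of_apply, Matrix.mul_apply, transpose_apply, hG, hin, ← hc, inner_sum,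
      real_inner_smul_right, mul_comm]
  have h1 : (Matrix.of fun i j => ⟪q i, u j⟫) = Matrix.of c * G := by
    ext i j
    simp only [of_apply, Matrix.mul_apply, hG, real_inner_comm (u j) (q i), hin]
    simp only [← hc, inner_sum, real_inner_smul_right]
    simp only [real_inner_comm]
  rw [h1, h2, Matrix.mul_nonsing_inv_cancel_right _ _ hGu]
  ext i j
  simp only [of_apply, Matrix.mul_apply, transpose_apply, hG, ← hc, sum_inner, inner_sum,
      real_inner_smul_right, real_inner_smul_left, Finset.mul_sum]
  rw [Finset.sum_comm]
  refine Finset.sum_congr rfl fun _ _ => Finset.sum_congr rfl fun _ _ => by ring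


theorem main_aux
    (E : Type*) [NormedAddCommGroup E] [InnerProductSpace ℝ E] [FiniteDimensional ℝ E]
    (Λ : Submodule ℤ E) [DiscreteTopology Λ]
    (Λ₁ Λ₂ : Submodule ℤ E) (h₁ : Λ₁ ≤ Λ) (h₂ : Λ₂ ≤ Λ)
    {n₁ n₂ ni ns : ℕ}
    (b₁ : Fin n₁ → E) (hb₁ : LinearIndependent ℤ b₁)
    (hs₁ : Submodule.span ℤ (Set.range b₁) = Λ₁)
    (b₂ : Fin n₂ → E) (hb₂ : LinearIndependent ℤ b₂)
    (hs₂ : Submodule.span ℤ (Set.range b₂) = Λ₂)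
    (bi : Fin ni → E) (hbi : LinearIndependent ℤ bi)
    (hsi : Submodule.span ℤ (Set.range bi) = Λ₁ ⊓ Λ₂)
    (bs : Fin ns → E) (hbs : LinearIndependent ℤ bs)
    (hss : Submodule.span ℤ (Set.range bs) = Λ₁ ⊔ Λ₂) :
    (Matrix.of fun i j => ⟪bi i, bi j⟫).det * (Matrix.of fun i j => ⟪bs i, bs j⟫).det ≤
    (Matrix.of fun i j => ⟪b₁ i, b₁ j⟫).det * (Matrix.of fun i j => ⟪b₂ i, b₂ j⟫).det := by
  have r₁ := linInd_real Λ b₁ hb₁ (hs₁ ▸ h₁)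
  have r₂ := linInd_real Λ b₂ hb₂ (hs₂ ▸ h₂)
  have ri := linInd_real Λ bi hbi (hsi ▸ inf_le_left.trans h₁)
  have hpq : ∀ j, ∃ y ∈ Λ₁, ∃ z ∈ Λ₂, y + z = bs j := fun j =>
    Submodule.mem_sup.1 (hss ▸ Submodule.subset_span ⟨j, rfl⟩)
  choose p hp q hq hpq using hpq
  have hbi1 : ∀ i, bi i ∈ Λ₁ ⊓ Λ₂ := fun i => hsi ▸ Submodule.subset_span ⟨i, rfl⟩
  set D := Submodule.span ℝ (Set.range bi) with hD
  set V := Submodule.span ℝ (Set.range b₁) with hV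
  have hDV : D ≤ V := by
    rw [hD, Submodule.span_le]
    rintro _ ⟨i, rfl⟩
    have : bi i ∈ Submodule.span ℤ (Set.range b₁) := hs₁ ▸ (hbi1 i).1
    exact Submodule.span_le_restrictScalars ℤ ℝ _ this
  let P : E →ₗ[ℝ] E := D.starProjection.toLinearMap
  have hPb : ∀ i, P (bi i) = bi i := fun i =>
    Submodule.starProjection_eq_self_iff.2 (Submodule.subset_span ⟨i, rfl⟩)
  let s : E × E →ₗ[ℝ] E := LinearMap.fst ℝ E E + LinearMap.snd ℝ E E
  let t : E × E →ₗ[ℝ] E := P ∘ₗ LinearMap.snd ℝ E E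
  let F : E × E →ₗ[ℝ] E × E →ₗ[ℝ] ℝ :=
    (innerₗ E).compl₁₂ s s + (innerₗ E).compl₁₂ t t
  have hF : ∀ x y : E × E, F x y = ⟪x.1 + x.2, y.1 + y.2⟫ + ⟪P x.2, P y.2⟫ := fun x y => rfl
  let v : Fin n₁ ⊕ Fin n₂ → E × E := Sum.elim (LinearMap.inl ℤ E E ∘ b₁) (LinearMap.inr ℤ E E ∘ b₂)
  let w : Fin ni ⊕ Fin ns → E × E := Sum.elim (fun i => (bi i, -bi i)) (fun j => (p j, q j))
  have hv : LinearIndependent ℤ v := linearIndependent_inl_union_inr' hb₁ hb₂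
  have hw : LinearIndependent ℤ w := by
    rw [Fintype.linearIndependent_iff] at hbi hbs ⊢
    intro g hg
    simp only [Fintype.sum_sum_type, w, Sum.elim_inl, Sum.elim_inr, Prod.smul_mk] at hg
    have hg1 := congrArg Prod.fst hg
    have hg2 := congrArg Prod.snd hg
    simp only [Prod.fst_add, Prod.snd_add, Prod.fst_sum, Prod.snd_sum, Prod.fst_zero,
      Prod.snd_zero, smul_neg, Finset.sum_neg_distrib] at hg1 hg2
    have hr : ∀ j, g (Sum.inr j) = 0 := by
      apply hbs (fun j => g (Sum.inr j))
      simp only [← hpq, smul_add, Finset.sum_add_distrib]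
      have := congrArg₂ (· + ·) hg1 hg2
      simp only [add_zero] at this
      rw [← this]; abel
    have hl : ∀ j, g (Sum.inl j) = 0 := by
      apply hbi (fun j => g (Sum.inl j))
      simpa [hr] using hg1
    rintro (i | j)
    · exact hl i
    · exact hr j
  have hsv : Submodule.span ℤ (Set.range v) = Λ₁.prod Λ₂ := by
    rw [← hs₁, ← hs₂, ← LinearMap.span_inl_union_inr, Set.Sum.elim_range, Set.range_comp,
      Set.range_comp]
  have hsw : Submodule.span ℤ (Set.range w) = Λ₁.prod Λ₂ := by
    apply le_antisymm
    · rw [Submodule.span_le]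
      rintro _ ⟨i | j, rfl⟩
      · exact ⟨(hbi1 i).1, neg_mem (hbi1 i).2⟩
      · exact ⟨hp j, hq j⟩
    · rintro ⟨a, b⟩ ⟨ha, hb⟩
      simp only at ha hb
      have hab : a + b ∈ Submodule.span ℤ (Set.range bs) :=
        hss ▸ Submodule.add_mem_sup ha hb
      obtain ⟨μ, hμ⟩ := (Submodule.mem_span_range_iff_exists_fun ℤ).1 hab
      simp only [← hpq, smul_add, Finset.sum_add_distrib] at hμ
      have hd : a - ∑ j, μ j • p j = -(b - ∑ j, μ j • q j) := by
        rw [neg_sub, sub_eq_sub_iff_add_eq_add, ← hμ]; abel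
      have hdm : a - ∑ j, μ j • p j ∈ Submodule.span ℤ (Set.range bi) := by
        rw [hsi]
        refine ⟨sub_mem ha (sum_mem fun j _ => Submodule.smul_mem _ _ (hp j)), ?_⟩
        rw [hd]
        exact neg_mem (sub_mem hb (sum_mem fun j _ => Submodule.smul_mem _ _ (hq j)))
      obtain ⟨ν, hν⟩ := (Submodule.mem_span_range_iff_exists_fun ℤ).1 hdm
      rw [Submodule.mem_span_range_iff_exists_fun]
      refine ⟨Sum.elim ν μ, ?_⟩
      simp only [Fintype.sum_sum_type, w, Sum.elim_inl, Sum.elim_inr, Prod.smul_mk]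
      ext
      · simp [Prod.fst_sum, hν]
      · simp only [Prod.snd_add, Prod.snd_sum, smul_neg, Finset.sum_neg_distrib, hν]
        rw [hd]; abel
  have key := det_change F v w hv hw (hsv.trans hsw.symm)
  set X : Matrix (Fin ni) (Fin ni) ℝ := Matrix.of fun i j => ⟪bi i, bi j⟫ with hX
  set B : Matrix (Fin n₁) (Fin n₁) ℝ := Matrix.of fun i j => ⟪b₁ i, b₁ j⟫ with hB
  have hXd : IsUnit X.det :=
    isUnit_iff_ne_zero.2 (Matrix.posDef_gram_of_linearIndependent (𝕜 := ℝ) ri).det_pos.ne'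
  have hBp : 0 < B.det := (Matrix.posDef_gram_of_linearIndependent (𝕜 := ℝ) r₁).det_pos
  have hBd : IsUnit B.det := isUnit_iff_ne_zero.2 hBp.ne'
  let _ := X.invertibleOfIsUnitDet hXd
  let _ := B.invertibleOfIsUnitDet hBd
  have ew : (Matrix.of fun i j => F (w i) (w j)) = Matrix.fromBlocks X
      (-(Matrix.of fun i j => ⟪bi i, q j⟫)) (-(Matrix.of fun i j => ⟪q i, bi j⟫))
      ((Matrix.of fun i j => ⟪bs i, bs j⟫) + Matrix.of fun i j => ⟪P (q i), P (q j)⟫) := by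
    have hPq : ∀ i j, ⟪bi i, P (q j)⟫ = ⟪bi i, q j⟫ := fun i j => by
      conv_rhs => rw [← hPb i]
      exact (Submodule.inner_starProjection_left_eq_right D _ _).symm
    ext (i | i) (j | j)
    · simp [hF, w, hPb, hX]
    · simp [hF, w, hPb, hPq]
    · simp only [of_apply, hF, w, Sum.elim_inl, Sum.elim_inr, fromBlocks_apply₂₁, Matrix.neg_apply, map_neg,
        hPb, add_neg_cancel, inner_zero_right, zero_add, inner_neg_right]
      rw [real_inner_comm, hPq, real_inner_comm]
    · simp [hF, w, hpq]
  have ev : (Matrix.of fun i j => F (v i) (v j)) = Matrix.fromBlocks B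
      (Matrix.of fun i j => ⟪b₁ i, b₂ j⟫) (Matrix.of fun i j => ⟪b₂ i, b₁ j⟫)
      ((Matrix.of fun i j => ⟪b₂ i, b₂ j⟫) + Matrix.of fun i j => ⟪P (b₂ i), P (b₂ j)⟫) := by
    ext (i | i) (j | j) <;> simp [hF, v, hB]
  rw [ew, ev, det_fromBlocks₁₁, det_fromBlocks₁₁, invOf_eq_nonsing_inv, invOf_eq_nonsing_inv,
    Matrix.neg_mul, Matrix.neg_mul, Matrix.mul_neg, neg_neg, proj_formula bi ri q,
    proj_formula b₁ r₁ b₂] at key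
  have e0 : (Matrix.of fun i j => ⟪P (q i), P (q j)⟫) = Matrix.of fun i j =>
    ⟪D.starProjection (q i), D.starProjection (q j)⟫ := rfl
  rw [e0, add_sub_cancel_right] at key
  rw [← key]
  refine mul_le_mul_of_nonneg_left ?_ hBp.le
  have gram_eq : ∀ (T : E →ₗ[ℝ] E) (x : Fin n₂ → ℝ),
      x ⬝ᵥ (Matrix.of fun i j => ⟪T (b₂ i), T (b₂ j)⟫) *ᵥ x = ‖T (∑ i, x i • b₂ i)‖ ^ 2 := by
    intro T x
    have := Matrix.star_dotProduct_gram_mulVec (𝕜 := ℝ) (fun i => T (b₂ i)) x x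
    rw [← real_inner_self_eq_norm_sq]
    simpa [Matrix.gram] using this
  have herm : ∀ (T : E →ₗ[ℝ] E),
      (Matrix.of fun i j => ⟪T (b₂ i), T (b₂ j)⟫).IsHermitian := fun T =>
    Matrix.isHermitian_gram (𝕜 := ℝ) (fun i => T (b₂ i))
  let Q : E →ₗ[ℝ] E := V.starProjection.toLinearMap
  have hPQ : ∀ x, ‖P x‖ ≤ ‖Q x‖ := by
    intro x
    have : P x = P (Q x) := by
      have := congrArg (fun f => f x) (Submodule.starProjection_comp_starProjection_of_le hDV)
      exact this.symm
    rw [this]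
    exact Submodule.norm_starProjection_apply_le D _
  have hQ1 : ∀ x, ‖Q x‖ ≤ ‖x‖ := fun x => Submodule.norm_starProjection_apply_le V _
  have g1 := gram_eq LinearMap.id
  have gP := gram_eq P
  have gQ := gram_eq Q
  have m1 := herm LinearMap.id
  have mP := herm P
  have mQ := herm Q
  simp only [LinearMap.id_apply] at g1 m1
  apply det_le_of_psd
  · refine Matrix.PosSemidef.of_dotProduct_mulVec_nonneg ((m1.add mP).sub mQ) fun x => ?_
    rw [star_trivial, sub_mulVec, add_mulVec, dotProduct_sub, dotProduct_add, g1]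
    erw [gP, gQ]
    have a1 := hQ1 (∑ i, x i • b₂ i)
    have a2 := norm_nonneg (Q (∑ i, x i • b₂ i))
    nlinarith [sq_nonneg ‖P (∑ i, x i • b₂ i)‖]
  · exact Matrix.posDef_gram_of_linearIndependent (𝕜 := ℝ) r₂
  · rw [show ∀ a b c : Matrix (Fin n₂) (Fin n₂) ℝ, a - (a + b - c) = c - b by intros; abel]
    refine Matrix.PosSemidef.of_dotProduct_mulVec_nonneg (mQ.sub mP) fun x => ?_
    rw [star_trivial, sub_mulVec, dotProduct_sub]
    erw [gP, gQ]
    have a1 := hPQ (∑ i, x i • b₂ i)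
    have a2 := norm_nonneg (P (∑ i, x i • b₂ i))
    nlinarith

end Helpers

/-- For subgroups `Λ₁, Λ₂` of a lattice `Λ` in a finite-dimensional real inner product space,
`c(Λ₁ ∩ Λ₂)·c(Λ₁ + Λ₂) ≤ c(Λ₁)·c(Λ₂)`, where the covolume `c` of a subgroup is computed from
the Gram determinant of any ℤ-basis (the empty basis giving `c(0) = 1`). -/
theorem covol_inf_mul_covol_sup_le
    (E : Type*) [NormedAddCommGroup E] [InnerProductSpace ℝ E] [FiniteDimensional ℝ E]
    (Λ : Submodule ℤ E) [DiscreteTopology Λ]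
    (Λ₁ Λ₂ : Submodule ℤ E) (h₁ : Λ₁ ≤ Λ) (h₂ : Λ₂ ≤ Λ)
    {n₁ n₂ ni ns : ℕ}
    (b₁ : Fin n₁ → E) (hb₁ : LinearIndependent ℤ b₁)
    (hs₁ : Submodule.span ℤ (Set.range b₁) = Λ₁)
    (b₂ : Fin n₂ → E) (hb₂ : LinearIndependent ℤ b₂)
    (hs₂ : Submodule.span ℤ (Set.range b₂) = Λ₂)
    (bi : Fin ni → E) (hbi : LinearIndependent ℤ bi)
    (hsi : Submodule.span ℤ (Set.range bi) = Λ₁ ⊓ Λ₂)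
    (bs : Fin ns → E) (hbs : LinearIndependent ℤ bs)
    (hss : Submodule.span ℤ (Set.range bs) = Λ₁ ⊔ Λ₂) :
    gramCovol bi * gramCovol bs ≤ gramCovol b₁ * gramCovol b₂ := by
  have h := main_aux E Λ Λ₁ Λ₂ h₁ h₂ b₁ hb₁ hs₁ b₂ hb₂ hs₂ bi hbi hsi bs hbs hss
  have hi : 0 ≤ (Matrix.of fun i j => ⟪bi i, bi j⟫).det :=
    (Matrix.posSemidef_gram ℝ bi).det_nonneg
  have h1 : 0 ≤ (Matrix.of fun i j => ⟪b₁ i, b₁ j⟫).det :=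
    (Matrix.posSemidef_gram ℝ b₁).det_nonneg
  unfold gramCovol
  rw [← Real.sqrt_mul hi, ← Real.sqrt_mul h1]
  exact Real.sqrt_le_sqrt h
end

section
/- Let Λ be a lattice in a finite-dimensional real inner product space E. Then for every real C > 0 the set of subgroups M ≤ Λ with c(M) ≤ C is finite. Consequently, the set of Arakelov degrees { −log c(M) : M a subgroup of Λ } is a discrete subset of ℝ. -/
open RealInnerProductSpace

theorem aux_basis {E : Type*} [NormedAddCommGroup E] [InnerProductSpace ℝ E]
    [FiniteDimensional ℝ E] (Λ : Submodule ℤ E) [DiscreteTopology Λ] :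
    ∃ (N : ℕ) (e : Module.Basis (Fin N) ℝ E), ∀ x ∈ Λ, ∀ i, ∃ z : ℤ, e.repr x i = z := by
  classical
  let a := Module.Free.chooseBasis ℤ Λ
  let v : Module.Free.ChooseBasisIndex ℤ Λ → E := fun i => (a i : E)
  have hspan : Submodule.span ℤ (Set.range v) = Λ := by
    have h1 : Set.range v = Λ.subtype '' Set.range a := by
      ext; simp [v]
    rw [h1, Submodule.span_image, a.span_eq]
    simp
  have hd : DiscreteTopology (Submodule.span ℤ (Set.range v)) := by rw [hspan]; infer_instance
  have hli : LinearIndependent ℝ v := by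
    rw [linearIndependent_iff_card_le_finrank_span, Real.finrank_eq_int_finrank_of_discrete hd,
      Set.finrank, hspan, Module.finrank_eq_card_chooseBasisIndex]
  let e := Module.Basis.sumExtend hli
  have : Finite (Module.Free.ChooseBasisIndex ℤ Λ ⊕ Module.Basis.sumExtendIndex hli) :=
    Module.Finite.finite_basis e
  obtain ⟨N, ⟨σ⟩⟩ := Finite.exists_equiv_fin
    (Module.Free.ChooseBasisIndex ℤ Λ ⊕ Module.Basis.sumExtendIndex hli)
  refine ⟨N, e.reindex σ, fun x hx => ?_⟩
  rw [← hspan] at hx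
  induction hx using Submodule.span_induction with
  | mem x hx =>
    obtain ⟨k, rfl⟩ := hx
    intro i
    have : v k = e (Sum.inl k) := by simp [e, Module.Basis.sumExtend]; rfl
    rw [this]
    rw [Module.Basis.repr_reindex_apply, Module.Basis.repr_self, Finsupp.single_apply]
    split_ifs
    · exact ⟨1, by simp⟩
    · exact ⟨0, by simp⟩
  | zero => exact fun i => ⟨0, by simp⟩
  | add x y _ _ hx hy =>
    intro i
    obtain ⟨p, hp⟩ := hx i
    obtain ⟨q, hq⟩ := hy i
    exact ⟨p + q, by rw [map_add, Finsupp.add_apply, hp, hq]; push_cast; rfl⟩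
  | smul r x _ hx =>
    intro i
    obtain ⟨p, hp⟩ := hx i
    refine ⟨r * p, ?_⟩
    rw [map_zsmul, Finsupp.smul_apply, hp]
    simp

theorem aux_bound {E : Type*} [NormedAddCommGroup E] [InnerProductSpace ℝ E]
    [FiniteDimensional ℝ E] {N : ℕ} (e : Module.Basis (Fin N) ℝ E) (n : ℕ) (C : ℝ) (hC : 0 < C) :
    ∃ K : ℤ, ∀ b : Fin n → E, gramCovol b ≤ C → ∀ I : Fin n → Fin N,
      |Matrix.det (Matrix.of fun i j => e.repr (b i) (I j))| ≤ K := by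
  have key : ∀ I : Fin n → Fin N, ∃ K : ℝ, ∀ b : Fin n → E, gramCovol b ≤ C →
      |Matrix.det (Matrix.of fun i j => e.repr (b i) (I j))| ≤ K := by
    intro I
    let f : E [⋀^Fin n]→ₗ[ℝ] ℝ :=
      (Matrix.detRowAlternating (R := ℝ) (n := Fin n)).compLinearMap
        (LinearMap.pi fun j => e.coord (I j))
    let F := LinearMap.toContinuousLinearMap (exteriorPower.alternatingMapLinearEquiv f)
    refine ⟨‖F‖ * C, fun b hb => ?_⟩
    have h1 : F (exteriorPower.ιMulti ℝ n b) =
        Matrix.det (Matrix.of fun i j => e.repr (b i) (I j)) := by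
      simp only [F, LinearMap.coe_toContinuousLinearMap',
        exteriorPower.alternatingMapLinearEquiv_apply_ιMulti]
      rfl
    have h2 : ‖exteriorPower.ιMulti ℝ n b‖ = gramCovol b := by
      rw [norm_eq_sqrt_real_inner, exteriorPower.inner_ιMulti_self]
      rfl
    rw [← h1, ← Real.norm_eq_abs]
    calc _ ≤ ‖F‖ * ‖exteriorPower.ιMulti ℝ n b‖ := F.le_opNorm _
      _ ≤ _ := by rw [h2]; gcongr
  choose K hK using key
  obtain ⟨K', hK'⟩ := (Set.finite_range K).bddAbove
  obtain ⟨K'', h⟩ := exists_int_gt K'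
  exact ⟨K'', fun b hb I => (hK I b hb).trans ((hK' ⟨I, rfl⟩).trans h.le)⟩

theorem aux_minor {n N : ℕ} (B : Matrix (Fin n) (Fin N) ℤ) (h : LinearIndependent ℤ B.row) :
    ∃ I : Fin n → Fin N, (B.submatrix id I).det ≠ 0 := by
  let A : Matrix (Fin n) (Fin N) ℚ := B.map (Int.cast)
  have hA : LinearIndependent ℚ A.row := by
    have := (LinearIndependent.iff_fractionRing (R := ℤ) (K := ℚ) (b := A.row)).1
    apply this
    exact h.map' ((Int.castAddHom ℚ).toIntLinearMap.compLeft (Fin N)) (by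
      rw [LinearMap.ker_eq_bot]
      intro x y hxy
      ext i
      have := congrFun hxy i
      simpa using this)
  have hr : Submodule.span ℚ (Set.range A.col) = ⊤ := by
    apply Submodule.eq_top_of_finrank_eq
    rw [← Matrix.rank_eq_finrank_span_cols, hA.rank_matrix]
    simp
  obtain ⟨s, hs, hsp, hli⟩ := exists_linearIndependent ℚ (Set.range A.col)
  rw [hr] at hsp
  let bs := Module.Basis.mk hli (by simpa using hsp.ge)
  have : Finite s := Module.Finite.finite_basis bs
  have : Fintype s := Fintype.ofFinite s
  have hcard : Fintype.card s = n := by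
    rw [← Module.finrank_eq_card_basis bs]; simp
  let σ : Fin n ≃ s := (Fintype.equivFinOfCardEq hcard).symm
  have hI : ∀ i, ∃ j, A.col j = σ i := fun i => hs (σ i).2
  choose I hI using hI
  refine ⟨I, fun h0 => ?_⟩
  have h1 : LinearIndependent ℚ (A.submatrix id I).col := by
    have : (A.submatrix id I).col = (fun x : s => (x : Fin n → ℚ)) ∘ σ := by
      ext i k
      exact congrFun (hI i) k
    rw [this]
    exact hli.comp _ σ.injective
  have h2 := (Matrix.linearIndependent_cols_iff_isUnit.1 h1)
  rw [Matrix.isUnit_iff_isUnit_det, isUnit_iff_ne_zero] at h2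
  apply h2
  have : A.submatrix id I = (B.submatrix id I).map (Int.castRingHom ℚ) := by
    ext; simp [A]
  rw [this, ← RingHom.mapMatrix_apply, ← RingHom.map_det, h0]
  simp

theorem aux_sub (n : ℕ) (d : ℤ) (hd : d ≠ 0) :
    {L : Submodule ℤ (Fin n → ℤ) | ∀ x, d • x ∈ L}.Finite := by
  let P : Submodule ℤ (Fin n → ℤ) := LinearMap.range (LinearMap.lsmul ℤ (Fin n → ℤ) d)
  have : Finite ((Fin n → ℤ) ⧸ P) := by
    apply Module.finite_of_fg_torsion
    intro x
    obtain ⟨y, rfl⟩ := Submodule.Quotient.mk_surjective _ x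
    refine ⟨⟨d, mem_nonZeroDivisors_of_ne_zero hd⟩, ?_⟩
    change d • (Submodule.Quotient.mk y : (Fin n → ℤ) ⧸ P) = _
    rw [← Submodule.Quotient.mk_smul, Submodule.Quotient.mk_eq_zero]
    exact ⟨y, rfl⟩
  have : Finite (Submodule ℤ ((Fin n → ℤ) ⧸ P)) :=
    Finite.of_injective (fun L => (L : Set ((Fin n → ℤ) ⧸ P))) SetLike.coe_injective
  refine (Set.finite_range (fun L : Submodule ℤ ((Fin n → ℤ) ⧸ P) => L.comap P.mkQ)).subset ?_
  intro L hL
  refine ⟨L.map P.mkQ, ?_⟩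
  have hP : P ≤ L := by
    rintro _ ⟨y, rfl⟩
    exact hL y
  simpa [Submodule.comap_map_mkQ] using hP

noncomputable def auxT {E : Type*} [NormedAddCommGroup E] [InnerProductSpace ℝ E] {N n : ℕ}
    (e : Module.Basis (Fin N) ℝ E) (d : ℤ) (D : Matrix (Fin n) (Fin N) ℤ) :
    (Fin n → ℤ) →ₗ[ℤ] E where
  toFun y := ∑ j, ((d : ℝ)⁻¹ * ((Matrix.vecMul y D j : ℤ) : ℝ)) • e j
  map_add' x y := by
    simp [Matrix.add_vecMul, mul_add, add_smul, Finset.sum_add_distrib]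
  map_smul' r x := by
    simp only [Matrix.smul_vecMul, Finset.smul_sum, Pi.smul_apply, smul_eq_mul, Int.cast_mul,
      eq_intCast, Int.cast_id, ← Int.cast_smul_eq_zsmul ℝ, smul_smul]
    refine Finset.sum_congr rfl fun j _ => ?_
    congr 1
    ring

theorem aux_main {E : Type*} [NormedAddCommGroup E] [InnerProductSpace ℝ E]
    [FiniteDimensional ℝ E] {N : ℕ} (e : Module.Basis (Fin N) ℝ E) (n : ℕ) (C : ℝ) (hC : 0 < C) :
    {M : Submodule ℤ E | (∀ x ∈ M, ∀ i, ∃ z : ℤ, e.repr x i = z) ∧ ∃ b : Fin n → E,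
      LinearIndependent ℤ b ∧ Submodule.span ℤ (Set.range b) = M ∧ gramCovol b ≤ C}.Finite := by
  obtain ⟨K, hK⟩ := aux_bound e n C hC
  have hfin : (⋃ d ∈ (Set.Icc (-K) K \ {0}), ⋃ D ∈ (Set.Icc (fun _ _ => -K) (fun _ _ => K) :
      Set (Fin n → Fin N → ℤ)), (fun L => Submodule.map (auxT e d D) L) ''
        {L : Submodule ℤ (Fin n → ℤ) | ∀ x, d • x ∈ L}).Finite := by
    refine Set.Finite.biUnion ((Set.finite_Icc _ _).subset Set.sdiff_subset) fun d hd => ?_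
    refine Set.Finite.biUnion (Set.finite_Icc _ _) fun D hD => ?_
    exact (aux_sub n d hd.2).image _
  refine hfin.subset ?_
  rintro M ⟨hM, b, hb, rfl, hbC⟩
  have hB : ∀ i j, ∃ z : ℤ, e.repr (b i) j = z := fun i j =>
    hM (b i) (Submodule.subset_span ⟨i, rfl⟩) j
  choose B' hB using hB
  obtain ⟨B, hBB⟩ : ∃ B : Matrix (Fin n) (Fin N) ℤ, ∀ i j, B' i j = B i j := ⟨B', fun _ _ => rfl⟩
  simp only [hBB] at hB
  have hBli : LinearIndependent ℤ B.row := by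
    rw [Fintype.linearIndependent_iff] at hb ⊢
    intro g hg
    apply hb
    apply e.repr.injective
    ext j
    have h := congrFun hg j
    simp only [Finset.sum_apply, Pi.smul_apply, smul_eq_mul, Pi.zero_apply, Matrix.row_apply] at h
    simp only [map_sum, map_zsmul, Finsupp.finsetSum_apply, Finsupp.smul_apply, hB, map_zero,
      Finsupp.zero_apply, zsmul_eq_mul]
    exact_mod_cast h
  have hbd : ∀ I : Fin n → Fin N, |(Matrix.submatrix B id I).det| ≤ K := by
    intro I
    have h := hK b hbC I
    have h2 : (Matrix.of fun i j => e.repr (b i) (I j)) =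
        (Matrix.submatrix B id I).map (Int.castRingHom ℝ) := by
      ext i j; simp [hB]
    rw [h2, ← RingHom.mapMatrix_apply, ← RingHom.map_det] at h
    simp only [eq_intCast] at h
    exact_mod_cast h
  obtain ⟨I, hI⟩ := aux_minor B hBli
  set A := Matrix.submatrix B id I with hA
  let D : Matrix (Fin n) (Fin N) ℤ := fun i j => Matrix.cramer A (fun k => B k j) i
  have hD : ∀ i j, |D i j| ≤ K := by
    intro i j
    have : D i j = (Matrix.submatrix B id (Function.update I i j)).det := by
      simp only [D, Matrix.cramer_apply]
      congr 1
      ext p q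
      by_cases hq : q = i
      · subst hq; simp [Matrix.submatrix_apply B]
      · simp [hq, hA, Matrix.submatrix_apply B]
    rw [this]
    exact hbd _
  have hAD : ∀ k j, Matrix.vecMul (A k) D j = A.det * B k j := by
    intro k j
    exact congrFun (Matrix.mulVec_cramer A (fun k => B k j)) k
  have hT : ∀ k, auxT e A.det D (A k) = b k := by
    intro k
    have hdR : (A.det : ℝ) ≠ 0 := by exact_mod_cast hI
    conv_rhs => rw [← e.sum_repr (b k)]
    change ∑ j, (((A.det : ℤ) : ℝ)⁻¹ * ((Matrix.vecMul (A k) D j : ℤ) : ℝ)) • e j = _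
    refine Finset.sum_congr rfl fun j _ => ?_
    rw [hAD, hB]
    rw [Int.cast_mul, inv_mul_cancel_left₀ hdR]
  simp only [Set.mem_iUnion]
  refine ⟨A.det, ⟨abs_le.1 (hbd I), hI⟩, D, ⟨fun i j => (abs_le.1 (hD i j)).1,
    fun i j => (abs_le.1 (hD i j)).2⟩, Submodule.span ℤ (Set.range A.row), ?_, ?_⟩
  · intro x
    have h : A.det • x = Matrix.vecMul (Matrix.vecMul x A.adjugate) A := by
      rw [Matrix.vecMul_vecMul, Matrix.adjugate_mul, Matrix.vecMul_smul, Matrix.vecMul_one]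
    rw [h, Matrix.vecMul_eq_sum]
    exact Submodule.sum_mem _ fun i _ => Submodule.smul_mem _ _ (Submodule.subset_span ⟨i, rfl⟩)
  · simp only
    rw [Submodule.map_span, ← Set.range_comp]
    congr 2
    ext k
    exact hT k

/-- Let `Λ` be a lattice in a finite-dimensional real inner product space and let `c` be the
covolume function on subgroups of `Λ` (computed via Gram determinants of ℤ-bases, with
`c(0) = 1` from the empty basis). Then for every `C > 0` only finitely many subgroups `M ≤ Λ`
satisfy `c(M) ≤ C`; consequently the set of Arakelov degrees `{−log c(M) : M ≤ Λ}` is a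
discrete subset of `ℝ`. -/
theorem finiteness_of_bounded_covolume_subgroups
    (E : Type*) [NormedAddCommGroup E] [InnerProductSpace ℝ E] [FiniteDimensional ℝ E]
    (Λ : Submodule ℤ E) [DiscreteTopology Λ]
    (c : Submodule ℤ E → ℝ)
    (hc : ∀ M : Submodule ℤ E, M ≤ Λ → ∀ (n : ℕ) (b : Fin n → E), LinearIndependent ℤ b →
      Submodule.span ℤ (Set.range b) = M → c M = gramCovol b) :
    (∀ C : ℝ, 0 < C → {M : Submodule ℤ E | M ≤ Λ ∧ c M ≤ C}.Finite) ∧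
    DiscreteTopology {x : ℝ | ∃ M : Submodule ℤ E, M ≤ Λ ∧ x = -Real.log (c M)} := by
  have part1 : ∀ C : ℝ, 0 < C → {M : Submodule ℤ E | M ≤ Λ ∧ c M ≤ C}.Finite := by
    intro C hC
    obtain ⟨N, e, he⟩ := aux_basis Λ
    refine (Set.Finite.biUnion (Set.finite_Iic (Module.finrank ℤ Λ))
      fun n _ => aux_main e n C hC).subset ?_
    rintro M ⟨hM, hMC⟩
    obtain ⟨n, bM⟩ := Submodule.basisOfPidOfLE hM (Module.Free.chooseBasis ℤ Λ)
    have hli : LinearIndependent ℤ (fun i => (bM i : E)) :=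
      bM.linearIndependent.map' M.subtype (Submodule.ker_subtype M)
    have hsp : Submodule.span ℤ (Set.range fun i => (bM i : E)) = M := by
      have h1 : (Set.range fun i => (bM i : E)) = M.subtype '' Set.range bM := by
        ext; simp
      rw [h1, Submodule.span_image, bM.span_eq]
      simp
    simp only [Set.mem_iUnion]
    refine ⟨n, ?_, fun x hx => he x (hM hx), _, hli, hsp, ?_⟩
    · have h := (bM.linearIndependent.map' (Submodule.inclusion hM)
        (Submodule.ker_inclusion _ _ hM)).fintype_card_le_finrank
      simpa using h
    · rw [← hc M hM n _ hli hsp]; exact hMC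
  refine ⟨part1, ?_⟩
  set S := {x : ℝ | ∃ M : Submodule ℤ E, M ≤ Λ ∧ x = -Real.log (c M)} with hS
  have hfin : ∀ R : ℝ, (S ∩ Set.Ioi R).Finite := by
    intro R
    refine ((part1 (Real.exp (-R)) (Real.exp_pos _)).image
      (fun M => -Real.log (c M))).subset ?_
    rintro _ ⟨⟨M, hM, rfl⟩, hR⟩
    refine ⟨M, ⟨hM, ?_⟩, rfl⟩
    rcases le_or_gt (c M) 0 with h | h
    · exact h.trans (Real.exp_pos _).le
    · rw [← Real.log_le_iff_le_exp h]
      have : R < -Real.log (c M) := hR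
      linarith
  rw [discreteTopology_subtype_iff]
  intro x hx
  have h1 : Set.Ioi (x - 1) ∩ ((S ∩ Set.Ioi (x - 1)) \ {x})ᶜ ∈ nhds x :=
    Filter.inter_mem (Ioi_mem_nhds (by linarith))
      (((hfin (x - 1)).subset Set.sdiff_subset).isClosed.isOpen_compl.mem_nhds (by simp))
  rw [← Filter.empty_mem_iff_bot]
  have h2 : (Set.Ioi (x - 1) ∩ ((S ∩ Set.Ioi (x - 1)) \ {x})ᶜ) ∩ {x}ᶜ ∩ S ∈
      nhdsWithin x {x}ᶜ ⊓ Filter.principal S :=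
    Filter.inter_mem_inf (Filter.inter_mem_inf h1 (Filter.mem_principal_self _))
      (Filter.mem_principal_self _)
  convert h2
  ext y
  simp
  grind
end

section
/- If V is a mod p representation of G_E of dimension d, then dim_E 𝔻(V) = d, and the natural E^s-linear map α_V : E^s ⊗_E 𝔻(V) → E^s ⊗_{𝔽_p} V, λ ⊗ x ↦ λ·x, is a G_E-equivariant isomorphism, where G_E acts on the source through its action on the coefficient field E^s alone and on the target diagonally. -/
open TensorProduct

/-- Invariant vectors independent over the base are independent over the big field. -/
theorem gd_indep {E Es W ι : Type*} [Field E] [Field Es] [Algebra E Es] [IsGalois E Es]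
    [AddCommGroup W] [Module Es W] [Module E W] [IsScalarTower E Es W]
    (σ : (Es ≃ₐ[E] Es) → W →+ W)
    (hσ : ∀ g (c : Es) w, σ g (c • w) = g c • σ g w)
    (b : ι → W) (hb : ∀ i g, σ g (b i) = b i) (hli : LinearIndependent E b) :
    LinearIndependent Es b := by
  classical
  rw [linearIndependent_iff']
  intro s
  induction s using Finset.induction_on with
  | empty => simp
  | insert a s ha ih =>
    intro c hc
    by_cases hca : c a = 0
    · rw [Finset.sum_insert ha, hca, zero_smul, zero_add] at hc
      intro i hi
      rcases Finset.mem_insert.1 hi with rfl | hi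
      · exact hca
      · exact ih c hc i hi
    · exfalso
      set e : ι → Es := fun i => (c a)⁻¹ * c i with he
      have hea : e a = 1 := by simp [he, hca]
      have hes : ∑ i ∈ insert a s, e i • b i = 0 := by
        simp only [he, mul_smul, ← Finset.smul_sum, hc, smul_zero]
      have hfix : ∀ i ∈ s, ∀ g : Es ≃ₐ[E] Es, g (e i) = e i := by
        intro i hi g
        have h1 := congrArg (σ g) hes
        simp only [map_sum, hσ, hb, map_zero] at h1
        have h2 : ∑ i ∈ insert a s, (g (e i) - e i) • b i = 0 := by
          simp only [sub_smul, Finset.sum_sub_distrib, h1, hes, sub_zero]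
        rw [Finset.sum_insert ha, hea, map_one, sub_self, zero_smul, zero_add] at h2
        exact sub_eq_zero.1 (ih _ h2 i hi)
      have hfix' : ∀ i ∈ insert a s, ∃ y : E, algebraMap E Es y = e i := by
        intro i hi
        rcases Finset.mem_insert.1 hi with rfl | hi
        · exact ⟨1, by rw [hea, map_one]⟩
        · exact (InfiniteGalois.mem_range_algebraMap_iff_fixed (e i)).2 (hfix i hi)
      have : ∀ i, ∃ y : E, i ∈ insert a s → algebraMap E Es y = e i := by
        intro i
        by_cases hi : i ∈ insert a s
        · obtain ⟨y, hy⟩ := hfix' i hi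
          exact ⟨y, fun _ => hy⟩
        · exact ⟨0, fun h => absurd h hi⟩
      choose y hy using this
      have h3 : ∑ i ∈ insert a s, y i • b i = 0 := by
        rw [← hes]
        refine Finset.sum_congr rfl fun i hi => ?_
        rw [← hy i hi, algebraMap_smul]
      have h4 := linearIndependent_iff'.1 hli _ y h3 a (Finset.mem_insert_self _ _)
      have h5 := hy a (Finset.mem_insert_self _ _)
      rw [h4, hea, map_zero] at h5
      exact zero_ne_one h5

/-- Injectivity of the comparison map. -/
theorem gd_inj {E Es W : Type*} [Field E] [Field Es] [Algebra E Es] [IsGalois E Es]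
    [AddCommGroup W] [Module Es W] [Module E W] [IsScalarTower E Es W]
    (σ : (Es ≃ₐ[E] Es) → W →+ W)
    (hσ : ∀ g (c : Es) w, σ g (c • w) = g c • σ g w)
    (D : Submodule E W) (hD : ∀ w ∈ D, ∀ g, σ g w = w) :
    Function.Injective (D.subtype.liftBaseChange Es) := by
  let b := Module.Basis.ofVectorSpace E D
  have hli : LinearIndependent Es (fun i => (b i : W)) := by
    apply gd_indep σ hσ _ (fun i g => hD _ (b i).2 g)
    exact b.linearIndependent.map' D.subtype (Submodule.ker_subtype _)
  rw [← LinearMap.ker_eq_bot, LinearMap.ker_eq_bot']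
  intro t ht
  have h1 := (b.baseChange Es).linearCombination_repr t
  rw [← h1, Finsupp.linearCombination_apply, Finsupp.sum, map_sum] at ht
  simp only [map_smul, Module.Basis.baseChange_apply, LinearMap.liftBaseChange_tmul, one_smul,
    Submodule.subtype_apply] at ht
  have h2 := linearIndependent_iff'.1 hli _ _ ht
  apply (b.baseChange Es).repr.injective
  rw [map_zero]
  ext i
  by_cases hi : i ∈ ((b.baseChange Es).repr t).support
  · exact h2 i hi
  · simpa using hi

theorem gd_surj
    (p : ℕ) [Fact p.Prime]
    (E Es : Type*) [Field E] [Field Es] [Algebra E Es] [IsGalois E Es]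
    [Algebra (ZMod p) E] [Algebra (ZMod p) Es] [IsScalarTower (ZMod p) E Es]
    (V : Type*) [AddCommGroup V] [Module (ZMod p) V] [FiniteDimensional (ZMod p) V]
    (ρ : (Es ≃ₐ[E] Es) →* (V ≃ₗ[ZMod p] V))
    (hcont : ∀ v : V, IsOpen {g : Es ≃ₐ[E] Es | ρ g v = v})
    (S : Submodule Es (Es ⊗[ZMod p] V))
    (hS : ∀ w : Es ⊗[ZMod p] V, (∀ g : Es ≃ₐ[E] Es,
      TensorProduct.map ((g.toLinearMap).restrictScalars (ZMod p)) (ρ g).toLinearMap w = w) →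
      w ∈ S) : S = ⊤ := by
  classical
  by_contra hne
  obtain ⟨f, hf0, hf⟩ := Submodule.exists_le_ker_of_lt_top S (lt_top_iff_ne_top.2 hne)
  apply hf0
  have hclosed : IsClosed ((ρ.ker : Subgroup (Es ≃ₐ[E] Es)) : Set (Es ≃ₐ[E] Es)) := by
    have : ((ρ.ker : Subgroup (Es ≃ₐ[E] Es)) : Set (Es ≃ₐ[E] Es)) =
        ⋂ v : V, {g : Es ≃ₐ[E] Es | ρ g v = v} := by
      ext g
      simp only [SetLike.mem_coe, MonoidHom.mem_ker, Set.mem_iInter, Set.mem_ofPred_eq]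
      exact ⟨fun h v => by rw [h]; rfl, fun h => LinearEquiv.ext h⟩
    rw [this]
    refine isClosed_iInter fun v => ?_
    let H : Subgroup (Es ≃ₐ[E] Es) :=
      { carrier := {g | ρ g v = v}
        mul_mem' := by
          intro a b ha hb
          simp only [Set.mem_ofPred_eq] at ha hb ⊢
          rw [map_mul, LinearEquiv.mul_apply, hb, ha]
        one_mem' := by simp
        inv_mem' := by
          intro a ha
          simp only [Set.mem_ofPred_eq] at ha ⊢
          have h : ρ a⁻¹ (ρ a v) = v := by
            rw [← LinearEquiv.mul_apply, ← map_mul, inv_mul_cancel, map_one]; rfl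
          rwa [ha] at h }
    exact Subgroup.isClosed_of_isOpen H (hcont v)
  let L := IntermediateField.fixedField (F := E) (E := Es) ρ.ker
  have hLfix : L.fixingSubgroup = ρ.ker :=
    InfiniteGalois.fixingSubgroup_fixedField ⟨ρ.ker, hclosed⟩
  have hL : ∀ g h : Es ≃ₐ[E] Es, ρ g = ρ h → ∀ x : L, g x = h x := by
    intro g h hgh x
    have hk : h⁻¹ * g ∈ ρ.ker := by
      rw [MonoidHom.mem_ker, map_mul, hgh, ← map_mul, inv_mul_cancel, map_one]
    have h1 := (IntermediateField.mem_fixedField_iff _ _).1 x.2 _ hk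
    have h2 := congrArg h h1
    rwa [← AlgEquiv.mul_apply, mul_inv_cancel_left] at h2
  have hVfin : Finite V := Module.finite_of_finite (ZMod p)
  have : Finite (V ≃ₗ[ZMod p] V) :=
    Finite.of_injective (fun e : V ≃ₗ[ZMod p] V => (e : V → V)) DFunLike.coe_injective
  have : Fintype ρ.range := Fintype.ofFinite _
  have hs : ∀ q : ρ.range, ∃ g, ρ g = q := fun q => q.2
  choose s hs using hs
  -- characters
  let χ : ρ.range → (L →* Es) := fun q =>
    ((s q : Es →ₐ[E] Es) : Es →* Es).comp (algebraMap L Es : L →* Es)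
  have hχ : ∀ q x, χ q x = s q x := fun q x => rfl
  have hχinj : Function.Injective χ := by
    intro q q' hqq
    have hmem : (s q')⁻¹ * s q ∈ L.fixingSubgroup := by
      rw [IntermediateField.mem_fixingSubgroup_iff]
      intro x hx
      have h1 : s q x = s q' x := DFunLike.congr_fun hqq (⟨x, hx⟩ : L)
      rw [AlgEquiv.mul_apply, h1, ← AlgEquiv.mul_apply, inv_mul_cancel]; rfl
    rw [hLfix, MonoidHom.mem_ker, map_mul, map_inv, hs, hs, inv_mul_eq_one] at hmem
    exact Subtype.ext hmem.symm
  have hind : LinearIndependent Es (fun q => (χ q : L → Es)) :=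
    (linearIndependent_monoidHom L Es).comp χ hχinj
  have hfv : ∀ v : V, f (1 ⊗ₜ v) = 0 := by
    intro v
    have hinv : ∀ x : L, (∑ q : ρ.range, (s q x) ⊗ₜ[ZMod p] ((q : V ≃ₗ[ZMod p] V) v)) ∈ S := by
      intro x
      apply hS
      intro h
      rw [map_sum]
      refine Fintype.sum_equiv (Equiv.mulLeft (⟨ρ h, h, rfl⟩ : ρ.range)) _ _ fun q => ?_
      rw [TensorProduct.map_tmul]
      have h1 : h (s q x) = s ((⟨ρ h, h, rfl⟩ : ρ.range) * q) x := by
        rw [← AlgEquiv.mul_apply]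
        apply hL
        rw [map_mul, hs, hs]; rfl
      simp only [Equiv.coe_mulLeft]
      rw [← h1]
      rfl
    have hsum : ∑ q : ρ.range, f (1 ⊗ₜ ((q : V ≃ₗ[ZMod p] V) v)) • (χ q : L → Es) = 0 := by
      funext x
      have h1 := LinearMap.mem_ker.1 (hf (hinv x))
      rw [map_sum] at h1
      rw [Finset.sum_apply, Pi.zero_apply, ← h1]
      refine Finset.sum_congr rfl fun q _ => ?_
      rw [Pi.smul_apply, hχ, smul_eq_mul, mul_comm, ← smul_eq_mul, ← map_smul,
        TensorProduct.smul_tmul', smul_eq_mul, mul_one]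
    exact Fintype.linearIndependent_iff.1 hind _ hsum 1
  ext w
  simpa using hfv w

/-- Galois descent for mod `p` representations: if `E` is a field of characteristic `p` with
separable closure `E^s` and absolute Galois group `G_E = Gal(E^s/E)` (with the Krull topology),
and `V` is a `d`-dimensional `𝔽_p`-representation of `G_E` that is continuous for the discrete
topology on `V` (all vector stabilizers are open), then `𝔻(V) := (E^s ⊗_{𝔽_p} V)^{G_E}` is an
`E`-vector space of dimension `d` and the natural `E^s`-linear map
`α_V : E^s ⊗_E 𝔻(V) → E^s ⊗_{𝔽_p} V`, `λ ⊗ x ↦ λ·x`, is a `G_E`-equivariant isomorphism,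
where `G_E` acts on the source through the coefficients `E^s` alone and on the target
diagonally. -/
theorem galois_descent_modp
    (p : ℕ) [Fact p.Prime]
    (E Es : Type*) [Field E] [Field Es] [Algebra E Es] [IsSepClosure E Es] [CharP E p]
    [Algebra (ZMod p) E] [Algebra (ZMod p) Es] [IsScalarTower (ZMod p) E Es]
    (V : Type*) [AddCommGroup V] [Module (ZMod p) V] [FiniteDimensional (ZMod p) V]
    (ρ : (Es ≃ₐ[E] Es) →* (V ≃ₗ[ZMod p] V))
    (hcont : ∀ v : V, IsOpen {g : Es ≃ₐ[E] Es | ρ g v = v}) :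
    ∃ D : Submodule E (Es ⊗[ZMod p] V),
      -- `D` is the submodule of `G_E`-invariants for the diagonal action
      (∀ w : Es ⊗[ZMod p] V,
          w ∈ D ↔ ∀ g : Es ≃ₐ[E] Es,
            TensorProduct.map ((g.toLinearMap).restrictScalars (ZMod p)) (ρ g).toLinearMap w
              = w) ∧
      -- `dim_E 𝔻(V) = d`
      Module.finrank E D = Module.finrank (ZMod p) V ∧
      -- the natural map `α_V` is a `G_E`-equivariant isomorphism
      ∃ α : (Es ⊗[E] D) →ₗ[Es] (Es ⊗[ZMod p] V),
        (∀ (x : Es) (y : D), α (x ⊗ₜ[E] y) = x • (y : Es ⊗[ZMod p] V)) ∧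
        Function.Bijective α ∧
        ∀ (g : Es ≃ₐ[E] Es) (t : Es ⊗[E] D),
          α (TensorProduct.map g.toLinearMap LinearMap.id t) =
            TensorProduct.map ((g.toLinearMap).restrictScalars (ZMod p)) (ρ g).toLinearMap
              (α t) := by
  have : IsGalois E Es := IsSepClosure.isGalois
  let σ : (Es ≃ₐ[E] Es) → (Es ⊗[ZMod p] V) →+ (Es ⊗[ZMod p] V) := fun g =>
    (TensorProduct.map ((g.toLinearMap).restrictScalars (ZMod p)) (ρ g).toLinearMap).toAddMonoidHom
  have hσ : ∀ g (c : Es) w, σ g (c • w) = g c • σ g w := by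
    intro g c w
    induction w using TensorProduct.induction_on with
    | zero => simp
    | tmul x v =>
      simp [σ, TensorProduct.smul_tmul']
    | add x y hx hy => rw [smul_add, map_add, hx, hy, map_add, smul_add]
  let D : Submodule E (Es ⊗[ZMod p] V) :=
    { carrier := {w | ∀ g, σ g w = w}
      add_mem' := by
        intro a b ha hb g
        rw [map_add, ha g, hb g]
      zero_mem' := fun g => map_zero _
      smul_mem' := by
        intro c w hw g
        rw [← algebraMap_smul Es c w, hσ, hw g, AlgEquiv.commutes] }
  have hD : ∀ w ∈ D, ∀ g, σ g w = w := fun w hw => hw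
  have hbij : Function.Bijective (D.subtype.liftBaseChange Es) := by
    refine ⟨gd_inj σ hσ D hD, ?_⟩
    rw [← LinearMap.range_eq_top]
    apply gd_surj p E Es V ρ hcont
    intro w hw
    exact ⟨1 ⊗ₜ (⟨w, hw⟩ : D), by
      rw [LinearMap.liftBaseChange_tmul, one_smul]; rfl⟩
  refine ⟨D, fun w => Iff.rfl, ?_, D.subtype.liftBaseChange Es, fun x y => rfl, hbij, ?_⟩
  · have hfree : Module.Free E D := Module.Free.of_divisionRing E D
    rw [← Module.finrank_baseChange (R := Es) (S := E) (M' := D),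
      ← Module.finrank_baseChange (R := Es) (S := ZMod p) (M' := V)]
    exact (LinearEquiv.ofBijective _ hbij).finrank_eq
  · intro g t
    induction t using TensorProduct.induction_on with
    | zero => simp
    | tmul x y =>
      rw [TensorProduct.map_tmul, LinearMap.liftBaseChange_tmul, LinearMap.liftBaseChange_tmul]
      have h := hσ g x (y : Es ⊗[ZMod p] V)
      rw [hD _ y.2 g] at h
      exact h.symm
    | add x y hx hy => rw [map_add, map_add, hx, hy, map_add, map_add]
end

section
/- Geo-arithmetical Riemann–Roch: for every full-rank lattice L in a finite-dimensional real inner product space E, h⁰(L) − h⁰(L^∨) = −log(covol(L)); equivalently Σ_{x∈L} e^{−π‖x‖²} = covol(L)^{−1} · Σ_{y∈L^∨} e^{−π‖y‖²}. -/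
open MeasureTheory

lemma rr_summable {E : Type*} [NormedAddCommGroup E] [NormedSpace ℝ E] [FiniteDimensional ℝ E]
    (M : Submodule ℤ E) [DiscreteTopology M] {c : ℝ} (hc : 0 < c) :
    Summable (fun x : M => Real.exp (-c * ‖(x : E)‖ ^ 2)) := by
  set n := Module.finrank ℤ M + 1 with hn
  have h1 : Summable fun z : M ↦ (n.factorial / c ^ n) * ‖z‖⁻¹ ^ (2 * n) :=
    (ZLattice.summable_norm_pow_inv M (2 * n) (by omega)).mul_left _
  refine Summable.of_norm_bounded_eventually h1 ?_
  refine (Set.finite_singleton (0 : M)).subset ?_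
  intro x hx
  by_contra hx0
  apply hx
  have hpos : 0 < ‖(x : E)‖ := by
    rw [norm_pos_iff]; simpa using hx0
  have h2 := Real.pow_div_factorial_le_exp (c * ‖(x : E)‖ ^ 2) (by positivity) n
  change ‖Real.exp (-c * ‖(x : E)‖ ^ 2)‖ ≤ (n.factorial / c ^ n) * ‖(x : E)‖⁻¹ ^ (2 * n)
  rw [Real.norm_of_nonneg (Real.exp_pos _).le, neg_mul, Real.exp_neg]
  refine (inv_anti₀ (by positivity) h2).trans (le_of_eq ?_)
  rw [inv_div, mul_pow, inv_pow, ← pow_mul]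
  field_simp

lemma rr_bound {E : Type*} [NormedAddCommGroup E] [NormedSpace ℝ E] (x l : E) (R : ℝ)
    (hx : ‖x‖ ≤ R) :
    Real.exp (-Real.pi * ‖l + x‖ ^ 2) ≤
      Real.exp (Real.pi * R ^ 2) * Real.exp (-(Real.pi / 2) * ‖l‖ ^ 2) := by
  rw [← Real.exp_add]
  apply Real.exp_le_exp.mpr
  have h1 : ‖l‖ ≤ ‖l + x‖ + R := by
    have := norm_sub_le (l + x) x
    rw [add_sub_cancel_right] at this
    linarith
  have h2 : ‖l‖ ^ 2 ≤ 2 * ‖l + x‖ ^ 2 + 2 * R ^ 2 := by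
    have h3 : ‖l‖ ^ 2 ≤ (‖l + x‖ + R) ^ 2 := by gcongr
    nlinarith [sq_nonneg (‖l + x‖ - R)]
  nlinarith [Real.pi_pos, mul_le_mul_of_nonneg_left h2 Real.pi_pos.le]

/-- The gaussian. -/
noncomputable def rrG {E : Type*} [NormedAddCommGroup E] (x : E) : ℂ :=
  ((Real.exp (-Real.pi * ‖x‖ ^ 2) : ℝ) : ℂ)

lemma rr_cont {E : Type*} [NormedAddCommGroup E] [NormedSpace ℝ E] [FiniteDimensional ℝ E]
    (L : Submodule ℤ E) [DiscreteTopology L] :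
    Continuous (fun x : E => ∑' l : L, rrG ((l : E) + x)) := by
  rw [continuous_iff_continuousAt]
  intro x₀
  have : ContinuousOn (fun x : E => ∑' l : L, rrG ((l : E) + x)) (Metric.ball 0 (‖x₀‖ + 1)) := by
    refine continuousOn_tsum (u := fun l : L => Real.exp (Real.pi * (‖x₀‖ + 1) ^ 2) *
      Real.exp (-(Real.pi / 2) * ‖(l : E)‖ ^ 2)) ?_ ?_ ?_
    · intro l
      unfold rrG
      fun_prop
    · exact (rr_summable L (by positivity)).mul_left _
    · intro l x hx
      rw [rrG, Complex.norm_real, Real.norm_of_nonneg (Real.exp_pos _).le]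
      exact rr_bound _ _ _ (by simpa using (mem_ball_zero_iff.mp hx).le)
  exact this.continuousAt (Metric.isOpen_ball.mem_nhds (by simp))

lemma rr_periodic {E : Type*} [NormedAddCommGroup E]
    (L : Submodule ℤ E) (x a : E) (ha : a ∈ L) :
    (∑' l : L, rrG ((l : E) + (a + x))) = ∑' l : L, rrG ((l : E) + x) := by
  rw [← (Equiv.addRight (⟨a, ha⟩ : L)).tsum_eq (fun l : L => rrG ((l : E) + x))]
  simp [add_assoc]

lemma rr_map {E : Type*} [NormedAddCommGroup E]
    [InnerProductSpace ℝ E] [FiniteDimensional ℝ E] [MeasurableSpace E] [BorelSpace E]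
    (L : Submodule ℤ E) [DiscreteTopology L] [IsZLattice ℝ L] {ι : Type*} [Fintype ι]
    (b : Module.Basis ι ℤ L) :
    Measure.map (b.ofZLatticeBasis ℝ).equivFun.symm (volume : Measure (ι → ℝ)) =
      (ENNReal.ofReal (ZLattice.covolume L))⁻¹ • (volume : Measure E) := by
  ext s hs
  have hm : Measurable (b.ofZLatticeBasis ℝ).equivFun.symm :=
    (LinearMap.continuous_of_finiteDimensional
      (b.ofZLatticeBasis ℝ).equivFun.symm.toLinearMap).measurable
  rw [Measure.map_apply hm hs, Measure.smul_apply, smul_eq_mul, mul_comm, ← div_eq_mul_inv,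
    ← ZLattice.volume_image_eq_volume_div_covolume' L b hs.nullMeasurableSet]
  congr 1
  exact ((b.ofZLatticeBasis ℝ).equivFun.image_eq_preimage_symm s).symm

/-- gaussian times character -/
noncomputable def rrH {E : Type*} [NormedAddCommGroup E] [InnerProductSpace ℝ E] (y x : E) : ℂ :=
  Complex.exp (-(Real.pi : ℂ) * ‖x‖ ^ 2 + (-2 * Real.pi * Complex.I) * (inner ℝ y x : ℝ))

lemma rrH_eq {E : Type*} [NormedAddCommGroup E] [InnerProductSpace ℝ E] (y x : E) :
    rrH y x = Complex.exp ((-2 * Real.pi * Complex.I) * (inner ℝ y x : ℝ)) * rrG x := by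
  rw [rrH, rrG, add_comm, Complex.exp_add]
  push_cast
  rfl

lemma rrH_add {E : Type*} [NormedAddCommGroup E] [InnerProductSpace ℝ E] (y x l : E)
    (h : ∃ n : ℤ, (inner ℝ y l : ℝ) = n) :
    rrH y (l + x) = Complex.exp ((-2 * Real.pi * Complex.I) * (inner ℝ y x : ℝ)) * rrG (l + x) := by
  obtain ⟨n, hn⟩ := h
  rw [rrH_eq, inner_add_right, hn]
  congr 1
  push_cast
  rw [mul_add, Complex.exp_add]
  have : (-2 * Real.pi * Complex.I) * (n : ℂ) = ((-n : ℤ) : ℂ) * (2 * Real.pi * Complex.I) := by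
    push_cast; ring
  rw [this, Complex.exp_int_mul_two_pi_mul_I, one_mul]

lemma rr_int {E : Type*} [NormedAddCommGroup E]
    [InnerProductSpace ℝ E] [FiniteDimensional ℝ E] [MeasurableSpace E] [BorelSpace E]
    (L : Submodule ℤ E) [DiscreteTopology L] [IsZLattice ℝ L] (D : Set E)
    (hD : IsAddFundamentalDomain L D volume) (y : E)
    (hy : ∀ l ∈ L, ∃ n : ℤ, (inner ℝ y l : ℝ) = n) :
    ∫ x in D, Complex.exp ((-2 * Real.pi * Complex.I) * (inner ℝ y x : ℝ)) *
      ∑' l : L, rrG ((l : E) + x) = rrG y := by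
  have hpi : 0 < ((Real.pi : ℂ)).re := by simpa using Real.pi_pos
  have hint : Integrable (rrH y) :=
    GaussianFourier.integrable_cexp_neg_mul_sq_norm_add hpi (-2 * Real.pi * Complex.I) y
  have hval : ∫ x, rrH y x = rrG y := by
    refine (GaussianFourier.integral_cexp_neg_mul_sq_norm_add hpi
      (-2 * Real.pi * Complex.I) y).trans ?_
    have hp : (Real.pi : ℂ) ≠ 0 := by simp [Real.pi_ne_zero]
    rw [div_self hp, Complex.one_cpow, one_mul, rrG]
    push_cast
    congr 1
    field_simp
    rw [Complex.I_sq]; ring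
  have hvadd : MeasurableVAdd L E := (inferInstance : MeasurableVAdd L.toAddSubgroup E)
  have hinv : VAddInvariantMeasure L E volume :=
    (inferInstance : VAddInvariantMeasure L.toAddSubgroup E volume)
  rw [← hval, hD.integral_eq_tsum'' _ hint, ← integral_tsum]
  · congr 1
    ext x
    rw [← tsum_mul_left]
    congr 1
    ext l
    exact (rrH_add y x l (hy l l.2)).symm
  · intro l
    have : Continuous (fun x : E => rrH y (l +ᵥ x)) := by
      change Continuous (fun x : E => rrH y ((l : E) + x))
      unfold rrH
      fun_prop
    exact this.aestronglyMeasurable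
  · rw [← hD.lintegral_eq_tsum'' (fun x => ‖rrH y x‖ₑ)]
    exact hint.2.ne

lemma rr_cube {E : Type*} [NormedAddCommGroup E]
    [InnerProductSpace ℝ E] [FiniteDimensional ℝ E] [MeasurableSpace E] [BorelSpace E]
    (L : Submodule ℤ E) [DiscreteTopology L] [IsZLattice ℝ L] {ι : Type*} [Fintype ι]
    (b : Module.Basis ι ℤ L) (f : E → ℂ) (hf : Continuous f) :
    ∫ v in {v : ι → ℝ | ∀ i, v i ∈ Set.Ioc (0 : ℝ) (0 + 1)},
      f ((b.ofZLatticeBasis ℝ).equivFun.symm v) =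
    ((ZLattice.covolume L)⁻¹ : ℝ) *
      ∫ x in ZSpan.fundamentalDomain (b.ofZLatticeBasis ℝ), f x := by
  have hm : Measurable (b.ofZLatticeBasis ℝ).equivFun.symm :=
    (LinearMap.continuous_of_finiteDimensional
      (b.ofZLatticeBasis ℝ).equivFun.symm.toLinearMap).measurable
  have h1 := setIntegral_map (μ := (volume : Measure (ι → ℝ)))
    (ZSpan.fundamentalDomain_measurableSet (b.ofZLatticeBasis ℝ))
    (f := f) hf.aestronglyMeasurable hm.aemeasurable
  rw [rr_map, Measure.restrict_smul, integral_smul_measure] at h1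
  have hset : (b.ofZLatticeBasis ℝ).equivFun.symm ⁻¹'
      (ZSpan.fundamentalDomain (b.ofZLatticeBasis ℝ)) =
      Set.pi Set.univ (fun _ : ι => Set.Ico (0 : ℝ) 1) := by
    ext v
    simp only [Set.mem_preimage, ZSpan.mem_fundamentalDomain, Set.mem_pi, Set.mem_univ,
      true_imp_iff]
    refine forall_congr' fun i => ?_
    rw [← Module.Basis.equivFun_apply, LinearEquiv.apply_symm_apply]
  have hset2 : {v : ι → ℝ | ∀ i, v i ∈ Set.Ioc (0 : ℝ) (0 + 1)} =
      Set.pi Set.univ (fun _ : ι => Set.Ioc (0 : ℝ) 1) := by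
    ext v; simp
  have hae : (Set.pi Set.univ (fun _ : ι => Set.Ioc (0 : ℝ) 1)) =ᵐ[volume]
      (Set.pi Set.univ (fun _ : ι => Set.Ico (0 : ℝ) 1)) :=
    (Measure.univ_pi_Ioc_ae_eq_Icc (f := fun _ : ι => (0 : ℝ)) (g := fun _ => 1)).trans
      (Measure.univ_pi_Ico_ae_eq_Icc (f := fun _ : ι => (0 : ℝ)) (g := fun _ => 1)).symm
  rw [hset] at h1
  rw [hset2, setIntegral_congr_set hae, ← h1, ENNReal.toReal_inv,
    ENNReal.toReal_ofReal (ZLattice.covolume_pos L volume).le, Complex.real_smul]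

lemma rr_poisson {E : Type*} [NormedAddCommGroup E]
    [InnerProductSpace ℝ E] [FiniteDimensional ℝ E] [MeasurableSpace E] [BorelSpace E]
    (L : Submodule ℤ E) [DiscreteTopology L] [IsZLattice ℝ L] {ι : Type*} [Fintype ι]
    (b : Module.Basis ι ℤ L) (Y : (ι → ℤ) → E)
    (hY : ∀ k i, (inner ℝ (Y k) (b i : E) : ℝ) = k i)
    (hs : Summable fun k => Real.exp (-Real.pi * ‖Y k‖ ^ 2)) :
    ∑' x : L, Real.exp (-Real.pi * ‖(x : E)‖ ^ 2) =
      (ZLattice.covolume L)⁻¹ * ∑' k, Real.exp (-Real.pi * ‖Y k‖ ^ 2) := by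
  set B := b.ofZLatticeBasis ℝ with hB
  have hφc : Continuous B.equivFun.symm :=
    LinearMap.continuous_of_finiteDimensional B.equivFun.symm.toLinearMap
  have hYx : ∀ k v, (inner ℝ (Y k) (B.equivFun.symm v) : ℝ) = ∑ i, k i * v i := by
    intro k v
    rw [Module.Basis.equivFun_symm_apply, inner_sum]
    refine Finset.sum_congr rfl fun i _ => ?_
    rw [inner_smul_right, hB, Module.Basis.ofZLatticeBasis_apply, hY, mul_comm]
  have hYL : ∀ k, ∀ l ∈ L, ∃ n : ℤ, (inner ℝ (Y k) l : ℝ) = n := by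
    intro k l hl
    refine ⟨∑ i, k i * b.repr ⟨l, hl⟩ i, ?_⟩
    have := hYx k (B.equivFun l)
    rw [LinearEquiv.symm_apply_apply] at this
    rw [this]
    push_cast
    refine Finset.sum_congr rfl fun i _ => ?_
    congr 1
    exact b.ofZLatticeBasis_repr_apply ℝ L ⟨l, hl⟩ i
  -- the quotient map
  let q : (ι → ℝ) → UnitAddTorus ι := Pi.map (fun _ => ((↑) : ℝ → UnitAddCircle))
  have hq : IsOpenQuotientMap q :=
    IsOpenQuotientMap.piMap (fun _ => QuotientAddGroup.isOpenQuotientMap_mk)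
  let F : C(ι → ℝ, ℂ) := ⟨fun v => ∑' l : L, rrG ((l : E) + B.equivFun.symm v),
    (rr_cont L).comp hφc⟩
  have hF : ∀ v w, q v = q w → F v = F w := by
    intro v w h
    have h1 : ∀ i, ∃ n : ℤ, v i - w i = n := by
      intro i
      have h2 : ((v i : ℝ) : UnitAddCircle) = (w i : ℝ) := congrFun h i
      rw [← sub_eq_zero, ← AddCircle.coe_sub, AddCircle.coe_eq_zero_iff] at h2
      obtain ⟨n, hn⟩ := h2
      exact ⟨n, by rw [← hn]; simp⟩
    choose n hn using h1
    have h3 : B.equivFun.symm v = (∑ i, n i • (b i : E)) + B.equivFun.symm w := by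
      rw [Module.Basis.equivFun_symm_apply, Module.Basis.equivFun_symm_apply,
        ← Finset.sum_add_distrib]
      refine Finset.sum_congr rfl fun i _ => ?_
      rw [hB, Module.Basis.ofZLatticeBasis_apply, ← Int.cast_smul_eq_zsmul ℝ, ← add_smul, ← hn]
      simp
    change ∑' l : L, rrG ((l : E) + B.equivFun.symm v) =
      ∑' l : L, rrG ((l : E) + B.equivFun.symm w)
    rw [h3]
    exact rr_periodic L _ _ (sum_mem fun i _ => L.smul_mem _ (b i).2)
  let qC : C(ι → ℝ, UnitAddTorus ι) := ⟨q, hq.continuous⟩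
  have hqC : Topology.IsQuotientMap qC := hq.isQuotientMap
  have hF2 : Function.FactorsThrough F qC := fun v w h => hF v w h
  let G : C(UnitAddTorus ι, ℂ) := hqC.lift F hF2
  have hG : ∀ v, G (q v) = F v := fun v =>
    congrArg (fun f : C(ι → ℝ, ℂ) => f v) (hqC.lift_comp F hF2)
  have hcoef : ∀ k, UnitAddTorus.mFourierCoeff G k =
      ((ZLattice.covolume L)⁻¹ : ℝ) * rrG (Y k) := by
    intro k
    rw [UnitAddTorus.mFourierCoeff_eq_integral _ _ (fun _ => 0),
      ← rr_int L _ (ZLattice.isAddFundamentalDomain b volume) (Y k) (hYL k),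
      ← rr_cube L b (fun x => Complex.exp ((-2 * Real.pi * Complex.I) * (inner ℝ (Y k) x : ℝ)) *
        ∑' l : L, rrG ((l : E) + x))]
    · congr 1
      ext v
      rw [smul_eq_mul]
      congr 1
      · rw [← hB, hYx]
        simp only [UnitAddTorus.mFourier, ContinuousMap.coe_mk, fourier_coe_apply]
        rw [← Complex.exp_sum]
        congr 1
        push_cast
        rw [Finset.mul_sum]
        refine Finset.sum_congr rfl fun i _ => ?_
        simp
        ring
      · exact hG v
    · exact Continuous.mul (by fun_prop) (rr_cont L)
  have hsum : Summable (UnitAddTorus.mFourierCoeff G) := by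
    rw [show UnitAddTorus.mFourierCoeff G = _ from funext hcoef]
    exact (Complex.ofRealCLM.summable hs).mul_left _
  have h0 := (UnitAddTorus.hasSum_mFourier_series_apply_of_summable hsum (q 0)).tsum_eq
  rw [hG] at h0
  have hone : ∀ k, UnitAddTorus.mFourier k (q 0) = 1 := by
    intro k
    simp [UnitAddTorus.mFourier, q]
  simp only [hone, hcoef, smul_eq_mul, mul_one] at h0
  rw [tsum_mul_left] at h0
  have h4 : F 0 = ∑' l : L, rrG (l : E) := by simp [F]
  rw [h4] at h0
  unfold rrG at h0
  rw [← Complex.ofReal_tsum, ← Complex.ofReal_tsum, ← Complex.ofReal_mul] at h0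
  exact (Complex.ofReal_injective h0).symm

lemma rr_dual {E : Type*} [NormedAddCommGroup E]
    [InnerProductSpace ℝ E] [FiniteDimensional ℝ E] [MeasurableSpace E] [BorelSpace E]
    (L : Submodule ℤ E) [DiscreteTopology L] [IsZLattice ℝ L]
    (Ldual : Submodule ℤ E)
    (hdual : ∀ y : E, y ∈ Ldual ↔ ∀ x ∈ L, ∃ n : ℤ, (inner ℝ x y : ℝ) = (n : ℝ)) :
    (Summable fun y : Ldual => Real.exp (-Real.pi * ‖(y : E)‖ ^ 2)) ∧
    (∑' x : L, Real.exp (-Real.pi * ‖(x : E)‖ ^ 2)) =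
      (ZLattice.covolume L volume)⁻¹ * ∑' y : Ldual, Real.exp (-Real.pi * ‖(y : E)‖ ^ 2) := by
  classical
  let b := Module.Free.chooseBasis ℤ L
  let S : LinearMap.BilinForm ℝ E := innerₗ E
  have hS : S.Nondegenerate := by
    refine ⟨fun x hx => ?_, fun x hx => ?_⟩
    · exact inner_self_eq_zero.mp (hx x)
    · exact inner_self_eq_zero.mp (hx x)
  have h1 := LinearMap.BilinForm.dualSubmodule_span_of_basis (R := ℤ) S hS (b.ofZLatticeBasis ℝ)
  rw [b.ofZLatticeBasis_span ℝ] at h1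
  set B' := S.dualBasis hS (b.ofZLatticeBasis ℝ) with hB'
  have h2 : Ldual = Submodule.span ℤ (Set.range B') := by
    rw [← h1]
    ext y
    rw [hdual, LinearMap.BilinForm.mem_dualSubmodule]
    refine forall₂_congr fun x _ => ?_
    rw [Submodule.mem_one]
    refine exists_congr fun n => ?_
    change _ ↔ (n : ℝ) = inner ℝ y x
    rw [real_inner_comm, eq_comm]
  subst h2
  have hs := rr_summable (Submodule.span ℤ (Set.range B')) Real.pi_pos
  refine ⟨hs, ?_⟩
  let e := (B'.restrictScalars ℤ).equivFun.symm
  rw [rr_poisson L b (fun k => (e k : E)) ?_ ?_]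
  · congr 1
    exact e.toEquiv.tsum_eq
      (fun y : Submodule.span ℤ (Set.range B') => Real.exp (-Real.pi * ‖(y : E)‖ ^ 2))
  · intro k i
    have h3 : ∀ j, (inner ℝ (B' j) (b i : E) : ℝ) = if i = j then 1 else 0 := by
      intro j
      have := S.apply_dualBasis_left hS (b.ofZLatticeBasis ℝ) j i
      rw [Module.Basis.ofZLatticeBasis_apply] at this
      exact this
    have h4 : (e k : E) = ∑ j, k j • B' j := by
      simp [e, Module.Basis.equivFun_symm_apply]
    rw [h4, sum_inner]
    simp only [← Int.cast_smul_eq_zsmul ℝ, real_inner_smul_left, h3]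
    simp
  · exact hs.comp_injective e.injective

/-- Geo-arithmetical Riemann–Roch (Poisson summation for lattices): for every full-rank lattice
`L` in a finite-dimensional real inner product space `E`, with dual lattice `L^∨`,
`h⁰(L) − h⁰(L^∨) = −log covol(L)`, where `h⁰(M) = log Σ_{x∈M} e^{−π‖x‖²}`; equivalently
`Σ_{x∈L} e^{−π‖x‖²} = covol(L)⁻¹ · Σ_{y∈L^∨} e^{−π‖y‖²}`. -/
theorem geo_arithmetical_riemann_roch
    (E : Type*) [NormedAddCommGroup E] [InnerProductSpace ℝ E] [FiniteDimensional ℝ E]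
    [MeasurableSpace E] [BorelSpace E]
    (L : Submodule ℤ E) [DiscreteTopology L] [IsZLattice ℝ L]
    (Ldual : Submodule ℤ E)
    (hdual : ∀ y : E, y ∈ Ldual ↔ ∀ x ∈ L, ∃ n : ℤ, (inner ℝ x y : ℝ) = (n : ℝ)) :
    Real.log (∑' x : L, Real.exp (-Real.pi * ‖(x : E)‖ ^ 2)) -
        Real.log (∑' y : Ldual, Real.exp (-Real.pi * ‖(y : E)‖ ^ 2)) =
      -Real.log (ZLattice.covolume L volume) ∧
    (∑' x : L, Real.exp (-Real.pi * ‖(x : E)‖ ^ 2)) =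
      (ZLattice.covolume L volume)⁻¹ * ∑' y : Ldual, Real.exp (-Real.pi * ‖(y : E)‖ ^ 2) := by
  obtain ⟨hs, h⟩ := rr_dual L Ldual hdual
  refine ⟨?_, h⟩
  have hpos : 0 < ∑' y : Ldual, Real.exp (-Real.pi * ‖(y : E)‖ ^ 2) :=
    hs.tsum_pos (fun _ => (Real.exp_pos _).le) 0 (Real.exp_pos _)
  have hc := ZLattice.covolume_pos L volume
  rw [h, Real.log_mul (inv_ne_zero hc.ne') hpos.ne', Real.log_inv]
  ring
end

section
/- Let k be an algebraically closed field, d ≥ 1, and q ≥ 2 an integer. If A, B ∈ GL_d(k) satisfy B·A·B⁻¹ = A^q, then every eigenvalue of A is a root of unity. -/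
/-- If `A, B ∈ GL_d(k)` over an algebraically closed field `k` satisfy `B·A·B⁻¹ = A^q` for some
integer `q ≥ 2`, then every eigenvalue of `A` (i.e. every root of its characteristic polynomial)
is a root of unity. -/
theorem eigenvalue_isRootOfUnity_of_conj_pow
    (k : Type*) [Field k] [IsAlgClosed k] (d : ℕ) (hd : 1 ≤ d) (q : ℕ) (hq : 2 ≤ q)
    (A B : GL (Fin d) k) (h : B * A * B⁻¹ = A ^ q)
    (lam : k) (hlam : (Matrix.charpoly (A : Matrix (Fin d) (Fin d) k)).IsRoot lam) :
    ∃ N : ℕ, 0 < N ∧ lam ^ N = 1 := by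
  set M : Matrix (Fin d) (Fin d) k := (A : Matrix (Fin d) (Fin d) k) with hM
  have hcp : (M ^ q).charpoly = M.charpoly := by
    have h1 : M ^ q = B.val * M * B⁻¹.val := by
      have := congrArg Units.val h
      simpa [hM] using this.symm
    rw [h1]
    simpa using Matrix.charpoly_units_conj B M
  have hstep : ∀ x, M.charpoly.IsRoot x → M.charpoly.IsRoot (x ^ q) := by
    intro x hx
    rw [← hcp]
    exact Matrix.mem_spectrum_iff_isRoot_charpoly.1
      (spectrum.pow_image_subset M q ⟨x, Matrix.mem_spectrum_iff_isRoot_charpoly.2 hx, rfl⟩)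
  have hiter : ∀ i : ℕ, M.charpoly.IsRoot (lam ^ q ^ i) := by
    intro i
    induction i with
    | zero => simpa using hlam
    | succ i ih =>
      rw [pow_succ, pow_mul]
      exact hstep _ ih
  have hne : lam ≠ 0 := by
    rintro rfl
    have h0 := Matrix.mem_spectrum_iff_isRoot_charpoly.2 hlam
    exact spectrum.zero_notMem k A.isUnit h0
  have hfin : {x | M.charpoly.IsRoot x}.Finite :=
    Polynomial.finite_setOfPred_isRoot (Matrix.charpoly_monic M).ne_zero
  obtain ⟨i, j, hij, he⟩ : ∃ i j : ℕ, i < j ∧ lam ^ q ^ i = lam ^ q ^ j := by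
    obtain ⟨i, -, j, -, hij, he⟩ := Set.infinite_univ.exists_lt_map_eq_of_mapsTo
      (f := fun i : ℕ => lam ^ q ^ i) (fun i _ => hiter i) hfin
    exact ⟨i, j, hij, he⟩
  have hlt : q ^ i < q ^ j := Nat.pow_lt_pow_right (by omega) hij
  refine ⟨q ^ j - q ^ i, by omega, ?_⟩
  rw [pow_sub₀ _ hne hlt.le, ← he]
  exact mul_inv_cancel₀ (pow_ne_zero _ hne)
end
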